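/- Given t₂,…,t_{d+1} ∈ ℂ with |t₂| < 1/2, there exists δ > 0 such that for all t₀, t₁ with 0 < t₀ < δ and |t₁|² < t₀(1/2 − |t₂|), there is a unique positively oriented polynomial curve of degree ≤ d encircling the origin with enclosed area π t₀ and exterior harmonic moments t₁,…,t_{d+1} (and all higher moments zero). -/

import Mathlib

open Complex

/-- The parametrization `w ↦ rw + Σ_{j=0}^d a_j w^{-j}` of a polynomial curve of degree `≤ d`. -/
noncomputable def polyParam (d : ℕ) (r : ℝ) (a : Fin (d + 1) → ℂ) : ℂ → ℂ :=
  fun w => (r : ℂ) * w + ∑ j : Fin (d + 1), a j * w ^ (-(j : ℤ))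

/-- The `k`-th exterior harmonic moment `(1/(2πik)) ∮_γ z̄ z^{-k} dz` of the curve
parametrized by `f` on the unit circle. -/
noncomputable def extMoment (f : ℂ → ℂ) (k : ℕ) : ℂ :=
  (2 * Real.pi * I * k)⁻¹ *
    ∮ w in C(0, 1), (starRingEnd ℂ) (f w) * (f w) ^ (-(k : ℤ)) * deriv f w

/-- The enclosed area `(1/(2i)) ∮_γ z̄ dz` of the curve parametrized by `f`. -/
noncomputable def encArea (f : ℂ → ℂ) : ℂ :=
  (2 * I)⁻¹ * ∮ w in C(0, 1), (starRingEnd ℂ) (f w) * deriv f w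

section

open Complex
open Filter Topology Metric Set

namespace PolyCurve

/-- exterior residue at infinity -/
theorem circle_ext {f : ℂ → ℂ} {L : ℂ}
    (hf : ∀ w : ℂ, 1 ≤ ‖w‖ → DifferentiableAt ℂ f w)
    (hL : Tendsto (fun w => w * f w) (Bornology.cobounded ℂ) (𝓝 L)) :
    (∮ w in C(0, 1), f w) = 2 * Real.pi * I * L := by
  have key : ∀ R : ℝ, 1 ≤ R → (∮ w in C(0, R), f w) = ∮ w in C(0, 1), f w := by
    intro R hR
    apply Complex.circleIntegral_eq_of_differentiable_on_annulus_off_countable one_pos hR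
      (s := ∅) countable_empty
    · intro w hw
      apply (hf w _).continuousAt.continuousWithinAt
      simpa using hw.2
    · intro w hw
      apply hf w
      have := hw.1.2
      simp at this
      exact this.le
  have hci : ∀ R : ℝ, 1 ≤ R → CircleIntegrable f 0 R := by
    intro R hR
    apply ContinuousOn.circleIntegrable (by linarith)
    intro w hw
    apply (hf w _).continuousAt.continuousWithinAt
    simp at hw; rw [hw]; exact hR
  rw [← sub_eq_zero, ← norm_le_zero_iff]
  apply le_of_forall_pos_le_add
  intro ε hε
  rw [zero_add]
  have h1 : ∀ᶠ w in Bornology.cobounded ℂ, ‖w * f w - L‖ < ε / (2 * Real.pi) := by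
    have := (Metric.tendsto_nhds.1 hL) (ε / (2 * Real.pi)) (by positivity)
    simpa [dist_eq_norm] using this
  rw [(hasBasis_cobounded_norm (E := ℂ)).eventually_iff] at h1
  obtain ⟨R0, -, hR0⟩ := h1
  set R := max R0 1 with hRdef
  have hR1 : 1 ≤ R := le_max_right _ _
  have hR : 0 < R := by linarith
  have h2 : (∮ w in C(0, R), L * w⁻¹) = 2 * Real.pi * I * L := by
    rw [circleIntegral.integral_const_mul]
    have := circleIntegral.integral_sub_center_inv (0:ℂ) hR.ne'
    simp only [sub_zero] at this
    rw [this]; ring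
  rw [← key R hR1, ← h2, ← circleIntegral.integral_sub (hci R hR1)]
  · have := circleIntegral.norm_integral_le_of_norm_le_const (f := fun w => f w - L * w⁻¹)
      (c := 0) (R := R) (C := ε / (2 * Real.pi) / R) hR.le ?_
    · refine this.trans (le_of_eq ?_)
      field_simp
    · intro w hw
      simp at hw
      have hw0 : w ≠ 0 := by rw [← norm_pos_iff, hw]; exact hR
      have h3 := hR0 (x := w) (by simp only [mem_ofPred_eq, hw]; exact le_max_left _ _)
      have : f w - L * w⁻¹ = (w * f w - L) * w⁻¹ := by field_simp
      rw [this, norm_mul, norm_inv, hw, div_eq_mul_inv]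
      gcongr
  · apply ContinuousOn.circleIntegrable hR.le
    apply ContinuousOn.mul continuousOn_const
    apply ContinuousOn.inv₀ continuousOn_id
    intro w hw
    simp at hw
    rw [id, ← norm_pos_iff, hw]; exact hR

variable {d : ℕ}

/-- normalized parametrization -/
noncomputable def gg (b : Fin (d + 1) → ℂ) (w : ℂ) : ℂ :=
  w + ∑ j : Fin (d + 1), b j * (w⁻¹) ^ (j : ℕ)

/-- its derivative -/
noncomputable def dg (b : Fin (d + 1) → ℂ) (w : ℂ) : ℂ :=
  1 - ∑ j : Fin (d + 1), (j : ℂ) * b j * (w⁻¹) ^ ((j : ℕ) + 1)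

/-- the reflected function -/
noncomputable def gc (b : Fin (d + 1) → ℂ) (w : ℂ) : ℂ :=
  w⁻¹ + ∑ j : Fin (d + 1), (starRingEnd ℂ) (b j) * w ^ (j : ℕ)

/-- weighted norm -/
noncomputable def Nb (b : Fin (d + 1) → ℂ) : ℝ :=
  ∑ j : Fin (d + 1), (j : ℝ) * ‖b j‖ ^ 2

/-- polynomial evaluation -/
noncomputable def PP (p : Fin (d + 1) → ℂ) (z : ℂ) : ℂ :=
  ∑ i : Fin (d + 1), p i * z ^ (i : ℕ)

theorem hasDerivAt_inv_pow (n : ℕ) {w : ℂ} (hw : w ≠ 0) :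
    HasDerivAt (fun w : ℂ => (w⁻¹) ^ n) (-((n : ℂ) * (w⁻¹) ^ (n + 1))) w := by
  have := (hasDerivAt_inv hw).fun_pow n
  refine this.congr_deriv ?_
  rcases n with _ | n
  · simp
  · simp only [Nat.add_sub_cancel]
    rw [← inv_pow]; ring

theorem hasDerivAt_gg (b : Fin (d + 1) → ℂ) {w : ℂ} (hw : w ≠ 0) :
    HasDerivAt (gg b) (dg b w) w := by
  unfold gg dg
  rw [sub_eq_add_neg, ← Finset.sum_neg_distrib]
  apply (hasDerivAt_id w).add
  apply HasDerivAt.fun_sum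
  intro j _
  have := (hasDerivAt_inv_pow (j : ℕ) hw).const_mul (b j)
  refine this.congr_deriv ?_
  ring

theorem differentiableAt_dg (b : Fin (d + 1) → ℂ) {w : ℂ} (hw : w ≠ 0) :
    DifferentiableAt ℂ (dg b) w := by
  unfold dg
  fun_prop (disch := assumption)

theorem differentiableAt_gg (b : Fin (d + 1) → ℂ) {w : ℂ} (hw : w ≠ 0) :
    DifferentiableAt ℂ (gg b) w := (hasDerivAt_gg b hw).differentiableAt

theorem deriv_gg (b : Fin (d + 1) → ℂ) {w : ℂ} (hw : w ≠ 0) :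
    deriv (gg b) w = dg b w := (hasDerivAt_gg b hw).deriv

theorem ne_zero_of_one_le {w : ℂ} (hw : 1 ≤ ‖w‖) : w ≠ 0 := by
  rw [← norm_pos_iff]; linarith

theorem conj_eq_inv {w : ℂ} (hw : ‖w‖ = 1) : (starRingEnd ℂ) w = w⁻¹ := by
  rw [Complex.inv_def, Complex.normSq_eq_norm_sq, hw]; simp

theorem conj_gg (b : Fin (d + 1) → ℂ) {w : ℂ} (hw : ‖w‖ = 1) :
    (starRingEnd ℂ) (gg b w) = gc b w := by
  unfold gg gc
  simp only [map_add, map_sum, map_mul, map_pow, map_inv₀, conj_eq_inv hw, inv_inv]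

theorem tendsto_inv_cob : Tendsto (fun w : ℂ => w⁻¹) (Bornology.cobounded ℂ) (𝓝 0) :=
  tendsto_inv₀_cobounded

theorem tendsto_dg (b : Fin (d + 1) → ℂ) :
    Tendsto (dg b) (Bornology.cobounded ℂ) (𝓝 1) := by
  have h : Tendsto (fun w : ℂ => 1 - ∑ j : Fin (d + 1), (j : ℂ) * b j * (w⁻¹) ^ ((j : ℕ) + 1))
      (Bornology.cobounded ℂ) (𝓝 (1 - ∑ j : Fin (d + 1), (j : ℂ) * b j * 0 ^ ((j : ℕ) + 1))) := by
    apply Tendsto.sub tendsto_const_nhds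
    apply tendsto_finsetSum
    intro j _
    exact (tendsto_inv_cob.pow _).const_mul _
  simp only [ne_eq, Nat.add_eq_zero_iff, one_ne_zero, and_false, not_false_eq_true, zero_pow,
    mul_zero, Finset.sum_const_zero, sub_zero] at h
  exact h

theorem eventually_ne_cob : ∀ᶠ w in Bornology.cobounded ℂ, w ≠ (0:ℂ) := by
  rw [(hasBasis_cobounded_norm (E := ℂ)).eventually_iff]
  refine ⟨1, trivial, fun w hw => ?_⟩
  simp only [mem_ofPred_eq] at hw
  rw [← norm_pos_iff]; linarith

theorem tendsto_gg_div (b : Fin (d + 1) → ℂ) :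
    Tendsto (fun w => gg b w * w⁻¹) (Bornology.cobounded ℂ) (𝓝 1) := by
  have h : Tendsto (fun w : ℂ => 1 + ∑ j : Fin (d + 1), b j * (w⁻¹) ^ ((j : ℕ) + 1))
      (Bornology.cobounded ℂ) (𝓝 (1 + ∑ j : Fin (d + 1), b j * 0 ^ ((j : ℕ) + 1))) := by
    apply Tendsto.add tendsto_const_nhds
    apply tendsto_finsetSum
    intro j _
    exact (tendsto_inv_cob.pow _).const_mul _
  simp only [ne_eq, Nat.add_eq_zero_iff, one_ne_zero, and_false, not_false_eq_true, zero_pow,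
    mul_zero, Finset.sum_const_zero, add_zero] at h
  refine h.congr' ?_
  filter_upwards [eventually_ne_cob] with w hw
  unfold gg
  rw [add_mul, mul_inv_cancel₀ hw, Finset.sum_mul]
  congr 1
  apply Finset.sum_congr rfl
  intro j _; ring

end PolyCurve

end

section

open Complex
open Filter Topology Metric Set Polynomial

namespace PolyCurve
variable {d : ℕ}

theorem continuousOn_gg_sphere (b : Fin (d + 1) → ℂ) : ContinuousOn (gg b) (sphere 0 1) := by
  intro w hw
  simp at hw
  exact (differentiableAt_gg b (ne_zero_of_one_le hw.ge)).continuousAt.continuousWithinAt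

theorem continuousOn_dg_sphere (b : Fin (d + 1) → ℂ) : ContinuousOn (dg b) (sphere 0 1) := by
  intro w hw
  simp at hw
  exact (differentiableAt_dg b (ne_zero_of_one_le hw.ge)).continuousAt.continuousWithinAt

theorem continuousOn_gc_sphere (b : Fin (d + 1) → ℂ) : ContinuousOn (gc b) (sphere 0 1) := by
  intro w hw
  simp at hw
  have hw0 := ne_zero_of_one_le hw.ge
  apply ContinuousAt.continuousWithinAt
  unfold gc
  fun_prop (disch := assumption)

theorem continuousOn_inv_sphere : ContinuousOn (fun w : ℂ => w⁻¹) (sphere 0 1) := by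
  apply ContinuousOn.inv₀ continuousOn_id
  intro w hw
  simp at hw
  exact ne_zero_of_one_le hw.ge

theorem continuous_PP (p : Fin (d + 1) → ℂ) : Continuous (PP p) := by
  unfold PP; fun_prop

theorem int_pow (b : Fin (d + 1) → ℂ) (m : ℕ) :
    (∮ w in C(0, 1), gg b w ^ m * dg b w) = 0 := by
  apply circleIntegral.integral_eq_zero_of_hasDerivWithinAt
    (f := fun w => gg b w ^ (m + 1) / ((m : ℂ) + 1)) zero_le_one
  intro w hw
  simp at hw
  have hw0 := ne_zero_of_one_le hw.ge
  apply HasDerivAt.hasDerivWithinAt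
  have hm : (m : ℂ) + 1 ≠ 0 := by exact_mod_cast Nat.succ_ne_zero m
  refine (((hasDerivAt_gg b hw0).fun_pow (m + 1)).div_const ((m : ℂ) + 1)).congr_deriv ?_
  simp only [Nat.add_sub_cancel]
  push_cast
  field_simp

theorem tendsto_gg_cob (b : Fin (d + 1) → ℂ) :
    Tendsto (gg b) (Bornology.cobounded ℂ) (Bornology.cobounded ℂ) := by
  rw [← tendsto_norm_atTop_iff_cobounded]
  have h := (tendsto_gg_div b).norm
  rw [norm_one] at h
  have h2 := h.pos_mul_atTop one_pos (tendsto_norm_cobounded_atTop (E := ℂ))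
  refine h2.congr' ?_
  filter_upwards [eventually_ne_cob] with w hw
  rw [← norm_mul, inv_mul_cancel_right₀ hw]

theorem tendsto_gg_inv (b : Fin (d + 1) → ℂ) :
    Tendsto (fun w => (gg b w)⁻¹) (Bornology.cobounded ℂ) (𝓝 0) :=
  tendsto_inv_cob.comp (tendsto_gg_cob b)

theorem int_zpow (b : Fin (d + 1) → ℂ) (hg : ∀ w : ℂ, 1 ≤ ‖w‖ → gg b w ≠ 0) (n : ℤ) :
    (2 * Real.pi * I)⁻¹ * (∮ w in C(0, 1), gg b w ^ n * dg b w) = if n = -1 then 1 else 0 := by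
  split_ifs with hn
  · subst hn
    rw [circle_ext (L := 1)]
    · field_simp
    · intro w hw
      have h0 := ne_zero_of_one_le hw
      have h1 := differentiableAt_gg b h0
      have h2 := differentiableAt_dg b h0
      have h3 := hg w hw
      simp only [zpow_neg_one]
      fun_prop (disch := assumption)
    · have h1 := ((tendsto_gg_div b).inv₀ one_ne_zero).mul (tendsto_dg b)
      rw [inv_one, one_mul] at h1
      refine h1.congr ?_
      intro w
      rw [mul_inv, inv_inv, zpow_neg_one]; ring
  · have : (∮ w in C(0, 1), gg b w ^ n * dg b w) = 0 := by
      have hm : (n : ℂ) + 1 ≠ 0 := by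
        intro h
        apply hn
        have : ((n + 1 : ℤ) : ℂ) = 0 := by push_cast; exact h
        have := Int.cast_eq_zero.1 this
        omega
      apply circleIntegral.integral_eq_zero_of_hasDerivWithinAt
        (f := fun w => gg b w ^ (n + 1) / ((n : ℂ) + 1)) zero_le_one
      intro w hw
      simp at hw
      have hw0 := ne_zero_of_one_le hw.ge
      apply HasDerivAt.hasDerivWithinAt
      have h1 := ((hasDerivAt_zpow (n + 1) (gg b w) (Or.inl (hg w hw.ge))).comp w
        (hasDerivAt_gg b hw0)).div_const ((n : ℂ) + 1)
      refine h1.congr_deriv ?_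
      simp only [add_sub_cancel_right]
      push_cast
      field_simp
    rw [this, mul_zero]

/-- the error function -/
noncomputable def EE (b p : Fin (d + 1) → ℂ) (w : ℂ) : ℂ := gc b w - PP p (gg b w)

noncomputable def GG (b : Fin (d + 1) → ℂ) : ℂ[X] := 1 + ∑ j : Fin (d + 1), C (b j) * X ^ ((j : ℕ) + 1)

noncomputable def YC (b : Fin (d + 1) → ℂ) : ℂ[X] :=
  X ^ (d + 1) + ∑ j : Fin (d + 1), C ((starRingEnd ℂ) (b j)) * X ^ (d - (j : ℕ))

noncomputable def YY (b p : Fin (d + 1) → ℂ) : ℂ[X] :=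
  YC b - ∑ i : Fin (d + 1), C (p i) * X ^ (d - (i : ℕ)) * GG b ^ (i : ℕ)

theorem pow_mul_inv_pow_sub {w : ℂ} (hw : w ≠ 0) {i d : ℕ} (hi : i ≤ d) :
    w ^ d * (w⁻¹) ^ (d - i) = w ^ i := by
  obtain ⟨k, rfl⟩ := Nat.exists_eq_add_of_le hi
  rw [Nat.add_sub_cancel_left, pow_add, mul_assoc, ← mul_pow, mul_inv_cancel₀ hw, one_pow, mul_one]

theorem gc_eq_YC (b : Fin (d + 1) → ℂ) {w : ℂ} (hw : w ≠ 0) :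
    gc b w = w ^ d * (YC b).eval w⁻¹ := by
  unfold gc YC
  simp only [eval_add, eval_pow, eval_X, eval_finsetSum, eval_mul, eval_C]
  rw [mul_add, Finset.mul_sum]
  congr 1
  · rw [pow_succ, ← mul_assoc, ← mul_pow, mul_inv_cancel₀ hw, one_pow, one_mul]
  · apply Finset.sum_congr rfl
    intro j _
    rw [mul_left_comm, pow_mul_inv_pow_sub hw (by omega)]

theorem gg_eq_GG (b : Fin (d + 1) → ℂ) {w : ℂ} (hw : w ≠ 0) :
    gg b w = w * (GG b).eval w⁻¹ := by
  unfold gg GG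
  simp only [eval_add, eval_pow, eval_X, eval_finsetSum, eval_mul, eval_C, eval_one]
  rw [mul_add, Finset.mul_sum, mul_one]
  congr 1
  apply Finset.sum_congr rfl
  intro j _
  rw [pow_succ]; field_simp

theorem EE_eq_YY (b p : Fin (d + 1) → ℂ) {w : ℂ} (hw : w ≠ 0) :
    EE b p w = w ^ d * (YY b p).eval w⁻¹ := by
  unfold EE YY
  rw [eval_sub, mul_sub, gc_eq_YC b hw]
  congr 1
  unfold PP
  simp only [eval_pow, eval_X, eval_finsetSum, eval_mul, eval_C]
  rw [Finset.mul_sum]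
  apply Finset.sum_congr rfl
  intro j _
  rw [gg_eq_GG b hw, mul_pow, ← pow_mul_inv_pow_sub hw (show (j : ℕ) ≤ d by omega)]
  ring

theorem tendsto_EE (b p : Fin (d + 1) → ℂ) (n : ℕ) (hn : ∀ k < n, (YY b p).coeff k = 0) :
    Tendsto (fun w => w * (EE b p w * gg b w ^ ((n : ℤ) - d - 1) * dg b w))
      (Bornology.cobounded ℂ) (𝓝 ((YY b p).coeff n)) := by
  obtain ⟨Z, hZ⟩ := X_pow_dvd_iff.2 hn
  have hc : (YY b p).coeff n = Z.eval 0 := by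
    rw [hZ, coeff_X_pow_mul' Z n n]; simp [coeff_zero_eq_eval_zero]
  rw [hc]
  have h1 : Tendsto (fun w : ℂ => Z.eval w⁻¹) (Bornology.cobounded ℂ) (𝓝 (Z.eval 0)) :=
    (Z.continuous.tendsto 0).comp tendsto_inv_cob
  have h2 := ((h1.mul ((tendsto_gg_div b).zpow₀ ((n : ℤ) - d - 1) (Or.inl one_ne_zero))).mul
    (tendsto_dg b))
  rw [one_zpow, mul_one, mul_one] at h2
  refine h2.congr' ?_
  filter_upwards [eventually_ne_cob] with w hw
  rw [EE_eq_YY b p hw, hZ, eval_mul, eval_pow, eval_X, mul_zpow]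
  have : (w⁻¹) ^ ((n : ℤ) - d - 1) = w * w ^ d * (w⁻¹) ^ n := by
    rw [inv_zpow', inv_pow, ← zpow_natCast, ← zpow_natCast, ← zpow_neg, ← zpow_one_add₀ hw,
      ← zpow_add₀ hw]
    congr 1; ring
  rw [this]; ring

/-- Laurent coefficient functional -/
noncomputable def Lc (j : ℕ) (f : ℂ → ℂ) : ℂ :=
  (2 * Real.pi * I)⁻¹ * ∮ w in C(0, 1), (w⁻¹) ^ (j + 1) * f w

theorem Lc_congr (j : ℕ) {f g : ℂ → ℂ} (h : ∀ w : ℂ, ‖w‖ = 1 → f w = g w) : Lc j f = Lc j g := by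
  unfold Lc
  congr 1
  apply circleIntegral.integral_congr zero_le_one
  intro w hw
  simp at hw
  simp only [h w hw]

theorem Lc_poly (Y : ℂ[X]) {j d : ℕ} (hj : j ≤ d) :
    Lc j (fun w => w ^ d * Y.eval w⁻¹) = Y.coeff (d - j) := by
  unfold Lc
  have h1 : (∮ w in C(0, 1), (w⁻¹) ^ (j + 1) * (w ^ d * Y.eval w⁻¹)) =
      ∮ w in C(0, 1), ∑ n ∈ Finset.range (Y.natDegree + 1),
        Y.coeff n * (w - 0) ^ ((d : ℤ) - j - n - 1) := by
    apply circleIntegral.integral_congr zero_le_one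
    intro w hw
    simp at hw
    have hw0 := ne_zero_of_one_le hw.ge
    simp only [eval_eq_sum_range, Finset.mul_sum]
    apply Finset.sum_congr rfl
    intro n _
    have : w ^ ((d : ℤ) - j - n - 1) = (w⁻¹) ^ (j + 1) * w ^ d * (w⁻¹) ^ n := by
      simp only [← zpow_natCast, inv_zpow']
      rw [← zpow_add₀ hw0, ← zpow_add₀ hw0]
      congr 1; push_cast; ring
    rw [sub_zero, this]; ring
  rw [h1, circleIntegral.integral_fun_sum]
  · have h2 : ∀ n : ℕ, (∮ w in C(0, 1), Y.coeff n * (w - 0) ^ ((d : ℤ) - j - n - 1)) =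
        if n = d - j then 2 * Real.pi * I * Y.coeff n else 0 := by
      intro n
      rw [circleIntegral.integral_const_mul]
      split_ifs with hn
      · have : (d : ℤ) - j - n - 1 = -1 := by omega
        rw [this]
        simp only [zpow_neg_one]
        rw [circleIntegral.integral_sub_center_inv 0 one_ne_zero]; ring
      · rw [circleIntegral.integral_sub_zpow_of_ne (by omega), mul_zero]
    simp only [h2]
    rw [Finset.sum_ite_eq']
    split_ifs with h
    · field_simp
    · simp at h
      rw [mul_zero, coeff_eq_zero_of_natDegree_lt (by omega)]
  · intro n _
    apply ContinuousOn.circleIntegrable zero_le_one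
    intro w hw
    simp at hw
    have hw0 := ne_zero_of_one_le hw.ge
    simp only [sub_zero]
    exact ((continuousAt_zpow₀ w _ (Or.inl hw0)).const_mul _).continuousWithinAt

end PolyCurve

end

section

open Complex
open Filter Topology Metric Set Polynomial

namespace PolyCurve
variable {d : ℕ}

theorem YC_coeff (b : Fin (d + 1) → ℂ) (j : Fin (d + 1)) :
    (YC b).coeff (d - (j : ℕ)) = (starRingEnd ℂ) (b j) := by
  unfold YC
  simp only [coeff_add, finsetSum_coeff, coeff_C_mul, coeff_X_pow]
  rw [if_neg (by omega), zero_add, Finset.sum_eq_single j]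
  · simp
  · intro i _ hij
    rw [if_neg, mul_zero]
    intro h
    apply hij
    ext
    omega
  · simp

theorem Lc_gc (b : Fin (d + 1) → ℂ) (j : Fin (d + 1)) :
    Lc j (gc b) = (starRingEnd ℂ) (b j) := by
  rw [← YC_coeff, ← Lc_poly (YC b) (by omega : (j : ℕ) ≤ d)]
  apply Lc_congr
  intro w hw
  rw [gc_eq_YC b (ne_zero_of_one_le hw.ge)]

theorem Lc_EE (b p : Fin (d + 1) → ℂ) (j : Fin (d + 1)) :
    Lc j (EE b p) = (YY b p).coeff (d - j) := by
  rw [← Lc_poly (YY b p) (by omega : (j : ℕ) ≤ d)]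
  apply Lc_congr
  intro w hw
  rw [EE_eq_YY b p (ne_zero_of_one_le hw.ge)]

theorem Lc_integrable (j : ℕ) {f : ℂ → ℂ} (hf : ContinuousOn f (sphere 0 1)) :
    CircleIntegrable (fun w => (w⁻¹) ^ (j + 1) * f w) 0 1 :=
  ((continuousOn_inv_sphere.pow _).mul hf).circleIntegrable zero_le_one

theorem Lc_sub (j : ℕ) {f g : ℂ → ℂ} (hf : ContinuousOn f (sphere 0 1))
    (hg : ContinuousOn g (sphere 0 1)) :
    Lc j (fun w => f w - g w) = Lc j f - Lc j g := by
  unfold Lc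
  rw [← mul_sub, ← circleIntegral.integral_sub (Lc_integrable j hf) (Lc_integrable j hg)]
  simp only [mul_sub]

theorem Lc_add (j : ℕ) {f g : ℂ → ℂ} (hf : ContinuousOn f (sphere 0 1))
    (hg : ContinuousOn g (sphere 0 1)) :
    Lc j (fun w => f w + g w) = Lc j f + Lc j g := by
  unfold Lc
  rw [← mul_add, ← circleIntegral.integral_add (Lc_integrable j hf) (Lc_integrable j hg)]
  simp only [mul_add]

theorem Lc_const_mul (j : ℕ) (a : ℂ) (f : ℂ → ℂ) :
    Lc j (fun w => a * f w) = a * Lc j f := by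
  unfold Lc
  rw [mul_left_comm a, ← circleIntegral.integral_const_mul a]
  congr 1
  apply circleIntegral.integral_congr zero_le_one
  intro w _
  simp only []
  ring

theorem Lc_norm_le (j : ℕ) {f : ℂ → ℂ} {K : ℝ} (h : ∀ w : ℂ, ‖w‖ = 1 → ‖f w‖ ≤ K) :
    ‖Lc j f‖ ≤ K := by
  have := circleIntegral.norm_two_pi_i_inv_smul_integral_le_of_norm_le_const
    (f := fun w => (w⁻¹) ^ (j + 1) * f w) (c := 0) (R := 1) (C := K) zero_le_one ?_
  · simpa [Lc, smul_eq_mul] using this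
  · intro w hw
    simp at hw
    rw [norm_mul, norm_pow, norm_inv, hw]
    simpa using h w hw

theorem continuousOn_PP_gg (b p : Fin (d + 1) → ℂ) :
    ContinuousOn (fun w => PP p (gg b w)) (sphere 0 1) :=
  (continuous_PP p).comp_continuousOn (continuousOn_gg_sphere b)

theorem coeff_YY (b p : Fin (d + 1) → ℂ) (j : Fin (d + 1)) :
    (YY b p).coeff (d - j) = (starRingEnd ℂ) (b j) - Lc j (fun w => PP p (gg b w)) := by
  rw [← Lc_EE, ← Lc_gc, ← Lc_sub j (continuousOn_gc_sphere b) (continuousOn_PP_gg b p)]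
  rfl

theorem coeff_YY_zero_iff (b p : Fin (d + 1) → ℂ) :
    (∀ k < d + 1, (YY b p).coeff k = 0) ↔
      ∀ j : Fin (d + 1), (starRingEnd ℂ) (b j) = Lc j (fun w => PP p (gg b w)) := by
  constructor
  · intro h j
    have := h (d - j) (by omega)
    rw [coeff_YY, sub_eq_zero] at this
    exact this
  · intro h k hk
    have h1 := coeff_YY b p ⟨d - k, by omega⟩
    rw [h ⟨d - k, by omega⟩, sub_self] at h1
    simp only at h1
    rwa [Nat.sub_sub_self (by omega)] at h1

/-- normalized moments -/
noncomputable def Mk (b : Fin (d + 1) → ℂ) (k : ℕ) : ℂ :=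
  (2 * Real.pi * I)⁻¹ * ∮ w in C(0, 1), gc b w * gg b w ^ (-(k : ℤ)) * dg b w

theorem continuousOn_zpow_gg (b : Fin (d + 1) → ℂ) (hg : ∀ w : ℂ, 1 ≤ ‖w‖ → gg b w ≠ 0) (n : ℤ) :
    ContinuousOn (fun w => gg b w ^ n) (sphere 0 1) := by
  apply (continuousOn_gg_sphere b).zpow₀
  intro w hw
  simp at hw
  exact Or.inl (hg w hw.ge)

theorem int_PP (b p : Fin (d + 1) → ℂ) (hg : ∀ w : ℂ, 1 ≤ ‖w‖ → gg b w ≠ 0) (k : ℕ)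
    (hk : 1 ≤ k) :
    (2 * Real.pi * I)⁻¹ * (∮ w in C(0, 1), PP p (gg b w) * gg b w ^ (-(k : ℤ)) * dg b w) =
      if h : k - 1 < d + 1 then p ⟨k - 1, h⟩ else 0 := by
  have h1 : (∮ w in C(0, 1), PP p (gg b w) * gg b w ^ (-(k : ℤ)) * dg b w) =
      ∮ w in C(0, 1), ∑ i : Fin (d + 1), p i * (gg b w ^ ((i : ℤ) - k) * dg b w) := by
    apply circleIntegral.integral_congr zero_le_one
    intro w hw
    simp at hw
    simp only [PP, Finset.sum_mul]
    apply Finset.sum_congr rfl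
    intro i _
    rw [sub_eq_add_neg, zpow_add₀ (hg w hw.ge), zpow_natCast]; ring
  rw [h1, circleIntegral.integral_fun_sum, Finset.mul_sum]
  · simp only [circleIntegral.integral_const_mul]
    have h2 : ∀ i : Fin (d + 1), (2 * Real.pi * I)⁻¹ * (p i * ∮ w in C(0, 1), gg b w ^ ((i : ℤ) - k) * dg b w)
        = if (i : ℕ) = k - 1 then p i else 0 := by
      intro i
      rw [mul_left_comm, int_zpow b hg]
      by_cases h : (i : ℕ) = k - 1
      · rw [if_pos (by omega), if_pos h, mul_one]
      · rw [if_neg (by omega), if_neg h, mul_zero]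
    simp only [h2]
    split_ifs with h
    · rw [Finset.sum_eq_single ⟨k - 1, h⟩]
      · simp
      · intro i _ hi
        rw [if_neg]
        intro h'; apply hi; ext; exact h'
      · simp
    · apply Finset.sum_eq_zero
      intro i _
      rw [if_neg (by omega)]
  · intro i _
    apply ContinuousOn.circleIntegrable zero_le_one
    exact continuousOn_const.mul ((continuousOn_zpow_gg b hg _).mul (continuousOn_dg_sphere b))

theorem int_EE (b p : Fin (d + 1) → ℂ) (hg : ∀ w : ℂ, 1 ≤ ‖w‖ → gg b w ≠ 0) (k : ℕ)
    (hk : 1 ≤ k) :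
    (2 * Real.pi * I)⁻¹ * (∮ w in C(0, 1), EE b p w * gg b w ^ (-(k : ℤ)) * dg b w) =
      Mk b k - if h : k - 1 < d + 1 then p ⟨k - 1, h⟩ else 0 := by
  rw [← int_PP b p hg k hk]
  unfold Mk
  rw [← mul_sub, ← circleIntegral.integral_sub]
  · simp only [EE, sub_mul]
  · exact (((continuousOn_gc_sphere b).mul (continuousOn_zpow_gg b hg _)).mul
      (continuousOn_dg_sphere b)).circleIntegrable zero_le_one
  · exact (((continuousOn_PP_gg b p).mul (continuousOn_zpow_gg b hg _)).mul
      (continuousOn_dg_sphere b)).circleIntegrable zero_le_one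

theorem differentiableAt_gc (b : Fin (d + 1) → ℂ) {w : ℂ} (hw : w ≠ 0) :
    DifferentiableAt ℂ (gc b) w := by
  unfold gc
  fun_prop (disch := assumption)

theorem differentiableAt_EE (b p : Fin (d + 1) → ℂ) {w : ℂ} (hw : w ≠ 0) :
    DifferentiableAt ℂ (EE b p) w := by
  unfold EE PP
  have h1 := differentiableAt_gg b hw
  have h2 := differentiableAt_gc b hw
  fun_prop

theorem charA (b p : Fin (d + 1) → ℂ) (hg : ∀ w : ℂ, 1 ≤ ‖w‖ → gg b w ≠ 0)
    (hM : ∀ j : Fin (d + 1), Mk b (j + 1) = p j) :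
    ∀ j : Fin (d + 1), (starRingEnd ℂ) (b j) = Lc j (fun w => PP p (gg b w)) := by
  rw [← coeff_YY_zero_iff]
  intro k
  induction k using Nat.strong_induction_on with
  | _ n ih =>
    intro hn
    have h1 := tendsto_EE b p n (fun k hk => ih k hk (by omega))
    have h2 := circle_ext (f := fun w => EE b p w * gg b w ^ ((n : ℤ) - d - 1) * dg b w) ?_ h1
    · have h3 := int_EE b p hg (d - n + 1) (by omega)
      rw [dif_pos (by omega), hM ⟨d - n, by omega⟩] at h3
      simp only [Nat.add_sub_cancel, sub_self] at h3
      have h4 : (-((d - n + 1 : ℕ) : ℤ)) = (n : ℤ) - d - 1 := by omega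
      rw [h4, h2] at h3
      have : (2 * Real.pi * I : ℂ) ≠ 0 := by simp [Real.pi_ne_zero]
      rwa [inv_mul_cancel_left₀ this] at h3
    · intro w hw
      have h0 := ne_zero_of_one_le hw
      exact ((differentiableAt_EE b p h0).mul
        ((differentiableAt_gg b h0).zpow (Or.inl (hg w hw)))).mul (differentiableAt_dg b h0)

theorem charB (b p : Fin (d + 1) → ℂ) (hg : ∀ w : ℂ, 1 ≤ ‖w‖ → gg b w ≠ 0)
    (hb : ∀ j : Fin (d + 1), (starRingEnd ℂ) (b j) = Lc j (fun w => PP p (gg b w)))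
    (k : ℕ) (hk : 1 ≤ k) :
    Mk b k = if h : k - 1 < d + 1 then p ⟨k - 1, h⟩ else 0 := by
  rw [← sub_eq_zero, ← int_EE b p hg k hk]
  rw [← coeff_YY_zero_iff] at hb
  have h1 := tendsto_EE b p (d + 1) hb
  have h2 := h1.mul ((tendsto_gg_inv b).pow k)
  rw [zero_pow (by omega), mul_zero] at h2
  rw [circle_ext (L := 0), mul_zero, mul_zero]
  · intro w hw
    have h0 := ne_zero_of_one_le hw
    exact ((differentiableAt_EE b p h0).mul
        ((differentiableAt_gg b h0).zpow (Or.inl (hg w hw)))).mul (differentiableAt_dg b h0)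
  · refine h2.congr ?_
    intro w
    have : ((d + 1 : ℕ) : ℤ) - d - 1 = 0 := by omega
    rw [this, zpow_zero, zpow_neg, zpow_natCast, inv_pow]; ring

end PolyCurve

end

section

open Complex
open Filter Topology Metric Set Polynomial

namespace PolyCurve
variable {d : ℕ}

noncomputable def DG (b : Fin (d + 1) → ℂ) : ℂ[X] :=
  1 - ∑ j : Fin (d + 1), C ((j : ℂ) * b j) * X ^ ((j : ℕ) + 1)

theorem dg_eq_DG (b : Fin (d + 1) → ℂ) (w : ℂ) : dg b w = (DG b).eval w⁻¹ := by
  unfold dg DG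
  simp only [eval_sub, eval_pow, eval_X, eval_finsetSum, eval_mul, eval_C, eval_one]

theorem YC_coeff_top (b : Fin (d + 1) → ℂ) : (YC b).coeff (d + 1) = 1 := by
  unfold YC
  simp only [coeff_add, finsetSum_coeff, coeff_C_mul, coeff_X_pow]
  rw [if_pos trivial, Finset.sum_eq_zero, add_zero]
  intro i _
  rw [if_neg (by omega), mul_zero]

theorem YC_coeff_big (b : Fin (d + 1) → ℂ) {n : ℕ} (hn : d + 1 < n) : (YC b).coeff n = 0 := by
  unfold YC
  simp only [coeff_add, finsetSum_coeff, coeff_C_mul, coeff_X_pow]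
  rw [if_neg (by omega), Finset.sum_eq_zero, add_zero]
  intro i _
  rw [if_neg (by omega), mul_zero]

/-- interior moments -/
noncomputable def Vm (b : Fin (d + 1) → ℂ) (m : ℕ) : ℂ :=
  (2 * Real.pi * I)⁻¹ * ∮ w in C(0, 1), gc b w * gg b w ^ m * dg b w

theorem Vm_zero (b : Fin (d + 1) → ℂ) : Vm b 0 = ((1 - Nb b : ℝ) : ℂ) := by
  have h1 : Vm b 0 = Lc 0 (fun w => w ^ (d + 1) * (YC b * DG b).eval w⁻¹) := by
    unfold Vm Lc
    congr 1
    apply circleIntegral.integral_congr zero_le_one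
    intro w hw
    simp at hw
    have h0 := ne_zero_of_one_le hw.ge
    simp only [eval_mul, gc_eq_YC b h0, dg_eq_DG]
    rw [pow_succ]; field_simp; ring
  rw [h1, Lc_poly _ (by omega), Nat.sub_zero]
  unfold DG
  rw [mul_sub, mul_one, Finset.mul_sum, coeff_sub, YC_coeff_top, finsetSum_coeff]
  unfold Nb
  push_cast
  congr 1
  apply Finset.sum_congr rfl
  intro j _
  rw [mul_left_comm, coeff_C_mul, coeff_mul_X_pow', if_pos (by omega)]
  have : d + 1 - ((j : ℕ) + 1) = d - j := by omega
  rw [this, YC_coeff, mul_assoc, Complex.mul_conj, Complex.normSq_eq_norm_sq]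
  push_cast; rfl

theorem GG_coeff (b : Fin (d + 1) → ℂ) (j : Fin (d + 1)) : (GG b).coeff ((j : ℕ) + 1) = b j := by
  unfold GG
  simp only [coeff_add, finsetSum_coeff, coeff_C_mul, coeff_X_pow, coeff_one]
  rw [if_neg (by omega), zero_add, Finset.sum_eq_single j]
  · simp
  · intro i _ hij
    rw [if_neg, mul_zero]
    intro h
    apply hij
    ext
    omega
  · simp

theorem GG_coeff_zero (b : Fin (d + 1) → ℂ) : (GG b).coeff 0 = 1 := by
  unfold GG
  simp only [coeff_add, finsetSum_coeff, coeff_C_mul, coeff_X_pow, coeff_one]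
  rw [if_pos trivial, Finset.sum_eq_zero, add_zero]
  intro i _
  rw [if_neg (by omega), mul_zero]

theorem exact_case (b p : Fin (d + 1) → ℂ) (hd : 0 < d) (hY : YY b p = 0) (hN : Nb b = 1)
    (hp : ‖p ⟨1, by omega⟩‖ < 1) : False := by
  unfold YY at hY
  rw [sub_eq_zero] at hY
  set e := (GG b).natDegree with he
  have he2 : 2 ≤ e := by
    by_contra hlt
    have hb : ∀ j : Fin (d + 1), 1 ≤ (j : ℕ) → b j = 0 := by
      intro j hj
      rw [← GG_coeff b j]
      exact coeff_eq_zero_of_natDegree_lt (by omega)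
    have : Nb b = 0 := by
      unfold Nb
      apply Finset.sum_eq_zero
      intro j _
      rcases Nat.eq_zero_or_pos (j : ℕ) with h | h
      · simp [h]
      · simp [hb j h]
    linarith
  have hG0 : GG b ≠ 0 := by
    intro h
    have := GG_coeff_zero b
    rw [h] at this; simp at this
  have hlc : (GG b).coeff e ≠ 0 := by
    rw [he]; exact leadingCoeff_ne_zero.2 hG0
  have hne : (Finset.univ.filter (fun i => p i ≠ 0)).Nonempty := by
    by_contra hcon
    rw [Finset.not_nonempty_iff_eq_empty, Finset.filter_eq_empty_iff] at hcon
    have h0 : ∀ i, p i = 0 := fun i => not_not.1 (hcon (Finset.mem_univ i))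
    have := YC_coeff_top b
    rw [hY] at this
    simp [h0] at this
  obtain ⟨m, hm, hmax⟩ := Finset.exists_max_image _ (fun i : Fin (d + 1) => (i : ℕ)) hne
  simp only [Finset.mem_filter, Finset.mem_univ, true_and] at hm hmax
  have hbig : ∀ i : Fin (d + 1), (m : ℕ) < i → p i = 0 := by
    intro i hi
    by_contra h
    have := hmax i h
    omega
  have hdeg : ∀ i : Fin (d + 1), (X ^ (d - (i : ℕ)) * GG b ^ (i : ℕ)).natDegree ≤ d + i * (e - 1) := by
    intro i
    refine natDegree_mul_le.trans ?_
    have h1 := natDegree_pow_le (p := GG b) (n := (i : ℕ))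
    rw [natDegree_X_pow]
    have h2 : (i : ℕ) * e = i * (e - 1) + i := by
      conv_lhs => rw [show e = (e - 1) + 1 by omega]
      ring
    rw [← he] at h1
    omega
  have hcoef : (YC b).coeff (d + m * (e - 1)) = p m * (GG b).coeff e ^ (m : ℕ) := by
    rw [hY, finsetSum_coeff, Finset.sum_eq_single m]
    · rw [mul_assoc, coeff_C_mul]
      congr 1
      have h2 : d + (m : ℕ) * (e - 1) = (m : ℕ) * e + (d - m) := by
        conv_rhs => rw [show e = (e - 1) + 1 by omega]
        rw [mul_add]; omega
      rw [h2, mul_comm (X ^ _), coeff_mul_X_pow, he, coeff_pow_mul_natDegree]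
      rfl
    · intro i _ hi
      rcases lt_or_gt_of_ne (fun h => hi (Fin.ext h) : (i : ℕ) ≠ m) with h | h
      · rw [mul_assoc, coeff_C_mul, coeff_eq_zero_of_natDegree_lt, mul_zero]
        refine (hdeg i).trans_lt ?_
        have : (i : ℕ) * (e - 1) < m * (e - 1) := Nat.mul_lt_mul_of_pos_right h (by omega)
        omega
      · rw [hbig i h]; simp
    · simp
  have hle : (m : ℕ) * (e - 1) ≤ 1 := by
    by_contra hcon
    rw [YC_coeff_big b (by omega)] at hcoef
    exact mul_ne_zero hm (pow_ne_zero _ hlc) hcoef.symm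
  have hm1 : (m : ℕ) ≠ 0 := by
    intro h0
    have h1 := YC_coeff_top b
    rw [hY, finsetSum_coeff, Finset.sum_eq_zero] at h1
    · simp at h1
    · intro i _
      rcases Nat.eq_zero_or_pos (i : ℕ) with h | h
      · rw [mul_assoc, coeff_C_mul, coeff_eq_zero_of_natDegree_lt, mul_zero]
        refine (hdeg i).trans_lt ?_
        rw [h]; omega
      · rw [hbig i (by omega)]; simp
  have hm1' : (m : ℕ) = 1 := by
    rcases Nat.lt_or_ge (m : ℕ) 2 with h | h
    · omega
    · have : 2 * 1 ≤ (m : ℕ) * (e - 1) := Nat.mul_le_mul h (by omega)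
      omega
  have hee : e = 2 := by
    rw [hm1'] at hle; omega
  have hb2 : ∀ j : Fin (d + 1), 2 ≤ (j : ℕ) → b j = 0 := by
    intro j hj
    rw [← GG_coeff b j]
    exact coeff_eq_zero_of_natDegree_lt (by omega)
  set o : Fin (d + 1) := ⟨1, by omega⟩ with ho
  have hNb : Nb b = ‖b o‖ ^ 2 := by
    unfold Nb
    rw [Finset.sum_eq_single o]
    · simp [ho]
    · intro j _ hj
      rcases Nat.lt_or_ge (j : ℕ) 2 with h | h
      · have : (j : ℕ) ≠ 1 := fun h => hj (Fin.ext h)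
        have : (j : ℕ) = 0 := by omega
        simp [this]
      · simp [hb2 j h]
    · simp
  have hpb : (starRingEnd ℂ) (b o) = p o := by
    rw [← YC_coeff, hY, finsetSum_coeff, Finset.sum_eq_single o]
    · simp only [ho]
      rw [mul_assoc, coeff_C_mul, coeff_X_pow_mul', if_pos le_rfl, Nat.sub_self, pow_one, GG_coeff_zero,
        mul_one]
    · intro i _ hi
      rcases Nat.lt_or_ge (i : ℕ) 2 with h | h
      · have : (i : ℕ) ≠ 1 := fun h => hi (Fin.ext h)
        have h0 : (i : ℕ) = 0 := by omega
        rw [h0, Nat.sub_zero, pow_zero, mul_one, coeff_C_mul, coeff_X_pow, if_neg, mul_zero]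
        simp only [ho]; omega
      · rw [hbig i (by omega)]; simp
    · simp
  rw [hNb, ← Complex.norm_conj, hpb] at hN
  nlinarith [norm_nonneg (p o)]

theorem coeff_bound (b : Fin (d + 1) → ℂ) (hg : ∀ w : ℂ, 1 ≤ ‖w‖ → gg b w ≠ 0) (j : Fin (d + 1)) :
    ‖b j‖ ≤ 2 ^ (d + 1) := by
  set c : Fin (d + 1) → ℂ := fun j => (starRingEnd ℂ) (b j) with hc
  have hYc : ∀ n, d + 1 < n → (YC c).coeff n = 0 := fun n hn => YC_coeff_big c hn
  have hnd : (YC c).natDegree = d + 1 := by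
    apply le_antisymm
    · rw [natDegree_le_iff_coeff_eq_zero]
      exact hYc
    · apply le_natDegree_of_ne_zero
      rw [YC_coeff_top]; exact one_ne_zero
  have hmon : (YC c).Monic := by
    rw [Monic, leadingCoeff, hnd, YC_coeff_top]
  have hev : ∀ w : ℂ, w ≠ 0 → (YC c).eval w = w ^ d * gg b w := by
    intro w hw
    have := gc_eq_YC c (inv_ne_zero hw)
    rw [inv_inv] at this
    have h2 : gc c w⁻¹ = gg b w := by
      unfold gc gg
      simp [hc]
    rw [← h2, this, ← mul_assoc, ← mul_pow, mul_inv_cancel₀ hw, one_pow, one_mul]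
  have := coeff_le_of_roots_le (B := 1) (f := RingHom.id ℂ) (p := YC c) (d - j) hmon
    (IsAlgClosed.splits _) ?_
  · rw [Polynomial.map_id, YC_coeff] at this
    simp only [hc, Complex.conj_conj, one_pow, one_mul] at this
    refine this.trans ?_
    rw [hnd]
    exact_mod_cast Nat.choose_le_two_pow _ _
  · intro z hz
    rw [Polynomial.map_id] at hz
    by_contra hcon
    push Not at hcon
    have h0 := ne_zero_of_one_le hcon.le
    have := (mem_roots'.1 hz).2
    rw [IsRoot, hev z h0] at this
    exact mul_ne_zero (pow_ne_zero _ h0) (hg z hcon.le) this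

end PolyCurve

end

section

open Complex
open Filter Topology Metric Set

namespace PolyCurve
variable {d : ℕ}

/-- divided difference kernel -/
noncomputable def KK (b : Fin (d + 1) → ℂ) (w u : ℂ) : ℂ :=
  1 - w⁻¹ * u⁻¹ * ∑ j : Fin (d + 1), b j * ∑ i ∈ Finset.range (j : ℕ),
    (w⁻¹) ^ i * (u⁻¹) ^ ((j : ℕ) - 1 - i)

theorem KK_mul (b : Fin (d + 1) → ℂ) {w u : ℂ} (hw : w ≠ 0) (hu : u ≠ 0) :
    gg b w - gg b u = (w - u) * KK b w u := by
  have h1 : gg b w - gg b u = (w - u) + ∑ j : Fin (d + 1), b j * ((w⁻¹) ^ (j : ℕ) - (u⁻¹) ^ (j : ℕ)) := by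
    unfold gg
    simp only [mul_sub, Finset.sum_sub_distrib]
    ring
  rw [h1]
  unfold KK
  simp only [← geom_sum₂_mul]
  rw [mul_sub, mul_one, sub_eq_add_neg (w - u), Finset.mul_sum, Finset.mul_sum, ← Finset.sum_neg_distrib]
  congr 1
  apply Finset.sum_congr rfl
  intro j _
  have : w⁻¹ - u⁻¹ = -((w - u) * (w⁻¹ * u⁻¹)) := by field_simp; ring
  rw [this]; ring

theorem KK_self (b : Fin (d + 1) → ℂ) (w : ℂ) : KK b w w = dg b w := by
  unfold KK dg
  congr 1
  rw [Finset.mul_sum]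
  apply Finset.sum_congr rfl
  intro j _
  have : ∀ i ∈ Finset.range (j : ℕ), (w⁻¹) ^ i * (w⁻¹) ^ ((j : ℕ) - 1 - i) = (w⁻¹) ^ ((j : ℕ) - 1) := by
    intro i hi
    rw [Finset.mem_range] at hi
    rw [← pow_add]; congr 1; omega
  rw [Finset.sum_congr rfl this, Finset.sum_const, Finset.card_range, nsmul_eq_mul]
  rcases Nat.eq_zero_or_pos (j : ℕ) with h | h
  · simp [h]
  · obtain ⟨k, hk⟩ : ∃ k, (j : ℕ) = k + 1 := ⟨j - 1, by omega⟩
    rw [hk, Nat.add_sub_cancel]; push_cast; ring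

theorem KK_bound (b : Fin (d + 1) → ℂ) {w u : ℂ} (hw : 1 ≤ ‖w‖) (hu : 1 ≤ ‖u‖) (h : KK b w u = 0) :
    ‖w‖ * ‖u‖ ≤ ∑ j : Fin (d + 1), (j : ℝ) * ‖b j‖ := by
  unfold KK at h
  rw [sub_eq_zero] at h
  have hw0 := ne_zero_of_one_le hw
  have hu0 := ne_zero_of_one_le hu
  have h2 : w * u = ∑ j : Fin (d + 1), b j * ∑ i ∈ Finset.range (j : ℕ),
    (w⁻¹) ^ i * (u⁻¹) ^ ((j : ℕ) - 1 - i) := by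
    calc w * u = w * u * 1 := (mul_one _).symm
      _ = _ := by rw [h]; field_simp
  rw [← norm_mul, h2]
  refine (norm_sum_le _ _).trans (Finset.sum_le_sum fun j _ => ?_)
  rw [norm_mul, mul_comm]
  gcongr
  refine (norm_sum_le _ _).trans ?_
  have : ∀ i ∈ Finset.range (j : ℕ), ‖(w⁻¹) ^ i * (u⁻¹) ^ ((j : ℕ) - 1 - i)‖ ≤ 1 := by
    intro i _
    rw [norm_mul, norm_pow, norm_pow, norm_inv, norm_inv]
    exact mul_le_one₀ (pow_le_one₀ (by positivity) (inv_le_one_of_one_le₀ hw)) (by positivity)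
      (pow_le_one₀ (by positivity) (inv_le_one_of_one_le₀ hu))
  refine (Finset.sum_le_sum this).trans ?_
  simp

def ZZ (b : Fin (d + 1) → ℂ) : Set (ℂ × ℂ) := {x | 1 ≤ ‖x.1‖ ∧ 1 ≤ ‖x.2‖ ∧ KK b x.1 x.2 = 0}

theorem isCompact_ZZ (b : Fin (d + 1) → ℂ) : IsCompact (ZZ b) := by
  apply Metric.isCompact_of_isClosed_isBounded
  · have h1 : IsClosed {x : ℂ × ℂ | 1 ≤ ‖x.1‖ ∧ 1 ≤ ‖x.2‖} :=
      (isClosed_le continuous_const continuous_fst.norm).inter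
        (isClosed_le continuous_const continuous_snd.norm)
    have h2 : ContinuousOn (fun x : ℂ × ℂ => KK b x.1 x.2) {x : ℂ × ℂ | 1 ≤ ‖x.1‖ ∧ 1 ≤ ‖x.2‖} := by
      have ha : ContinuousOn (fun x : ℂ × ℂ => x.1⁻¹) {x : ℂ × ℂ | 1 ≤ ‖x.1‖ ∧ 1 ≤ ‖x.2‖} :=
        continuous_fst.continuousOn.inv₀ fun x hx => ne_zero_of_one_le hx.1
      have hb : ContinuousOn (fun x : ℂ × ℂ => x.2⁻¹) {x : ℂ × ℂ | 1 ≤ ‖x.1‖ ∧ 1 ≤ ‖x.2‖} :=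
        continuous_snd.continuousOn.inv₀ fun x hx => ne_zero_of_one_le hx.2
      unfold KK
      fun_prop
    have := h2.preimage_isClosed_of_isClosed h1 (isClosed_singleton (x := (0:ℂ)))
    have e : ZZ b = {x : ℂ × ℂ | 1 ≤ ‖x.1‖ ∧ 1 ≤ ‖x.2‖} ∩ (fun x => KK b x.1 x.2) ⁻¹' {0} := by
      apply Set.ext
      intro x
      exact and_assoc.symm
    rw [e]; exact this
  · rw [isBounded_iff_forall_norm_le]
    refine ⟨∑ j : Fin (d + 1), (j : ℝ) * ‖b j‖, fun x hx => ?_⟩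
    have := KK_bound b hx.1 hx.2.1 hx.2.2
    rw [Prod.norm_def]
    apply max_le
    · nlinarith [hx.1, hx.2.1]
    · nlinarith [hx.1, hx.2.1]

theorem KK_zero_iff (b : Fin (d + 1) → ℂ) (hd : ∀ w : ℂ, 1 ≤ ‖w‖ → dg b w ≠ 0) {w u : ℂ}
    (hw : 1 ≤ ‖w‖) (hu : 1 ≤ ‖u‖) : KK b w u = 0 ↔ w ≠ u ∧ gg b w = gg b u := by
  have h := KK_mul b (ne_zero_of_one_le hw) (ne_zero_of_one_le hu)
  constructor
  · intro h0
    refine ⟨?_, ?_⟩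
    · rintro rfl
      rw [KK_self] at h0
      exact hd w hw h0
    · rw [h0, mul_zero, sub_eq_zero] at h
      exact h
  · rintro ⟨hne, he⟩
    rw [he, sub_self] at h
    exact (mul_eq_zero.1 h.symm).resolve_left (sub_ne_zero.2 hne)

theorem map_nhds_gg (b : Fin (d + 1) → ℂ) (hd : ∀ w : ℂ, 1 ≤ ‖w‖ → dg b w ≠ 0) {w : ℂ}
    (hw : 1 ≤ ‖w‖) : map (gg b) (𝓝 w) = 𝓝 (gg b w) := by
  have hw0 := ne_zero_of_one_le hw
  have han : AnalyticAt ℂ (gg b) w := by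
    have : DifferentiableOn ℂ (gg b) {0}ᶜ := fun z hz => (differentiableAt_gg b hz).differentiableWithinAt
    exact this.analyticAt (isOpen_compl_singleton.mem_nhds hw0)
  have h := han.hasStrictDerivAt
  rw [deriv_gg b hw0] at h
  exact h.map_nhds_eq (hd w hw)

theorem isOpen_image_gg (b : Fin (d + 1) → ℂ) (hd : ∀ w : ℂ, 1 ≤ ‖w‖ → dg b w ≠ 0) :
    IsOpen (gg b '' {u | 1 < ‖u‖}) := by
  rw [isOpen_iff_mem_nhds]
  rintro _ ⟨u, hu, rfl⟩
  rw [← map_nhds_gg b hd hu.le]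
  exact image_mem_map ((isOpen_lt continuous_const continuous_norm).mem_nhds hu)

theorem isClosed_image_gg (b : Fin (d + 1) → ℂ) : IsClosed (gg b '' {u | 1 ≤ ‖u‖}) := by
  have hcl : IsClosed {u : ℂ | 1 ≤ ‖u‖} := isClosed_le continuous_const continuous_norm
  have hcont : Continuous (fun u : {u : ℂ | 1 ≤ ‖u‖} => gg b u) := by
    rw [continuous_iff_continuousAt]
    intro u
    exact (differentiableAt_gg b (ne_zero_of_one_le u.2)).continuousAt.comp continuous_subtype_val.continuousAt
  have hp : IsProperMap (fun u : {u : ℂ | 1 ≤ ‖u‖} => gg b u) := by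
    rw [isProperMap_iff_tendsto_cocompact]
    refine ⟨hcont, ?_⟩
    have h := tendsto_gg_cob b
    rw [Metric.cobounded_eq_cocompact] at h
    exact h.comp hcl.isClosedEmbedding_subtypeVal.tendsto_cocompact
  have := hp.isClosedMap.isClosed_range
  rwa [image_eq_range]

theorem dichotomy (b : Fin (d + 1) → ℂ) (hd : ∀ w : ℂ, 1 ≤ ‖w‖ → dg b w ≠ 0)
    (hinj : InjOn (gg b) (sphere 0 1)) :
    InjOn (gg b) {u | 1 ≤ ‖u‖} ∨ ∀ ζ, ∃ u, 1 < ‖u‖ ∧ gg b u = ζ := by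
  have hpre : IsPreconnected (sphere (0:ℂ) 1) := by
    apply isPreconnected_sphere
    rw [Complex.rank_real_complex]; norm_num
  set A : Set ℂ := Prod.fst '' ZZ b with hA
  have hAc : IsCompact A := (isCompact_ZZ b).image continuous_fst
  set U : Set ℂ := {0}ᶜ ∩ gg b ⁻¹' (gg b '' {u | 1 < ‖u‖}) with hU
  have hUo : IsOpen U := by
    apply ContinuousOn.isOpen_inter_preimage _ isOpen_compl_singleton (isOpen_image_gg b hd)
    exact fun w hw => (differentiableAt_gg b hw).continuousAt.continuousWithinAt
  have hAU : ∀ w, ‖w‖ = 1 → (w ∈ A ↔ w ∈ U) := by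
    intro w hw
    constructor
    · rintro ⟨⟨w', u⟩, ⟨h1, h2, h3⟩, rfl⟩
      simp only at h1 h2 h3 hw
      obtain ⟨hne, he⟩ := (KK_zero_iff b hd h1 h2).1 h3
      refine ⟨ne_zero_of_one_le h1, u, ?_, he.symm⟩
      rcases h2.eq_or_lt with h | h
      · exact absurd (hinj (by simp [hw]) (by simp [← h]) he) hne
      · exact h
    · rintro ⟨_, u, hu, he⟩
      have hu' : 1 < ‖u‖ := hu
      refine ⟨(w, u), ⟨hw.ge, hu'.le, (KK_zero_iff b hd hw.ge hu'.le).2 ⟨?_, he.symm⟩⟩, rfl⟩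
      rintro rfl
      linarith
  rw [isPreconnected_iff_subset_of_disjoint] at hpre
  have hcov : sphere (0:ℂ) 1 ⊆ U ∪ Aᶜ := by
    intro w hw
    have hw' : ‖w‖ = 1 := by simpa using hw
    by_cases h : w ∈ A
    · exact Or.inl ((hAU w hw').1 h)
    · exact Or.inr h
  have hdisj : sphere (0:ℂ) 1 ∩ (U ∩ Aᶜ) = ∅ := by
    apply Set.eq_empty_of_forall_notMem
    rintro w ⟨hw, h1, h2⟩
    exact h2 ((hAU w (by simpa using hw)).2 h1)
  rcases hpre U Aᶜ hUo hAc.isClosed.isOpen_compl hcov hdisj with h | h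
  · right
    have hS : gg b '' {u | 1 ≤ ‖u‖} = gg b '' {u | 1 < ‖u‖} := by
      apply Subset.antisymm
      · rintro _ ⟨u, hu, rfl⟩
        rcases (show 1 ≤ ‖u‖ from hu).eq_or_lt with h1 | h1
        · exact (h (by simp [← h1] : u ∈ sphere (0:ℂ) 1)).2
        · exact ⟨u, h1, rfl⟩
      · exact image_mono fun u hu => (show 1 < ‖u‖ from hu).le
    have hclopen : IsClopen (gg b '' {u | 1 < ‖u‖}) :=
      ⟨hS ▸ isClosed_image_gg b, isOpen_image_gg b hd⟩
    rcases isClopen_iff.1 hclopen with h0 | h0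
    · exfalso
      have : gg b 2 ∈ gg b '' {u | 1 < ‖u‖} := ⟨2, by simp, rfl⟩
      rw [h0] at this; exact this
    · intro ζ
      have : ζ ∈ gg b '' {u | 1 < ‖u‖} := by rw [h0]; trivial
      exact this
  · left
    have hAo : IsOpen A := by
      rw [isOpen_iff_mem_nhds]
      rintro _ ⟨⟨w, u⟩, ⟨h1, h2, h3⟩, rfl⟩
      simp only at h1 h2 h3 ⊢
      obtain ⟨hne, he⟩ := (KK_zero_iff b hd h1 h2).1 h3
      have hw1 : 1 < ‖w‖ := by
        rcases h1.eq_or_lt with h0 | h0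
        · exact absurd ⟨(w, u), ⟨h1, h2, h3⟩, rfl⟩ (h (by simp [← h0] : w ∈ sphere (0:ℂ) 1))
        · exact h0
      have hu1 : 1 < ‖u‖ := by
        rcases h2.eq_or_lt with h0 | h0
        · exact absurd ⟨(u, w), ⟨h2, h1, (KK_zero_iff b hd h2 h1).2 ⟨hne.symm, he.symm⟩⟩, rfl⟩
            (h (by simp [← h0] : u ∈ sphere (0:ℂ) 1))
        · exact h0
      obtain ⟨N, M, hN, hM, hwN, huM, hdis⟩ := t2_separation hne
      have hΩ : IsOpen {u : ℂ | 1 < ‖u‖} := isOpen_lt continuous_const continuous_norm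
      have hM' : gg b '' (M ∩ {u | 1 < ‖u‖}) ∈ 𝓝 (gg b w) := by
        rw [he, ← map_nhds_gg b hd h2]
        exact image_mem_map ((hM.inter hΩ).mem_nhds ⟨huM, hu1⟩)
      have hc := (differentiableAt_gg b (ne_zero_of_one_le h1)).continuousAt
      filter_upwards [hc hM', (hN.inter hΩ).mem_nhds ⟨hwN, hw1⟩] with w' hw' hw''
      obtain ⟨u', ⟨hu', hu''⟩, heq⟩ := hw'
      have ha : 1 ≤ ‖w'‖ := (show 1 < ‖w'‖ from hw''.2).le
      have hb : 1 ≤ ‖u'‖ := (show 1 < ‖u'‖ from hu'').le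
      refine ⟨(w', u'), ⟨ha, hb, (KK_zero_iff b hd ha hb).2 ⟨?_, heq.symm⟩⟩, rfl⟩
      rintro rfl
      exact disjoint_left.1 hdis hw''.1 hu'
    have hA0 : A = ∅ := by
      rcases isClopen_iff.1 ⟨hAc.isClosed, hAo⟩ with h0 | h0
      · exact h0
      · rw [h0] at hAc
        exact absurd hAc (noncompact_univ ℂ)
    intro w hw u hu he
    by_contra hne
    have : w ∈ A := ⟨(w, u), ⟨hw, hu, (KK_zero_iff b hd hw hu).2 ⟨hne, he⟩⟩, rfl⟩
    rw [hA0] at this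
    exact this

end PolyCurve

end

section

open Complex
open Filter Topology Metric Set Polynomial

namespace PolyCurve
variable {d : ℕ}

noncomputable def cj (b : Fin (d + 1) → ℂ) : Fin (d + 1) → ℂ := fun j => (starRingEnd ℂ) (b j)

theorem YC_cj_eval (b : Fin (d + 1) → ℂ) {w : ℂ} (hw : w ≠ 0) :
    (YC (cj b)).eval w = w ^ d * gg b w := by
  have := gc_eq_YC (cj b) (inv_ne_zero hw)
  rw [inv_inv] at this
  have h2 : gc (cj b) w⁻¹ = gg b w := by
    unfold gc gg
    simp [cj]
  rw [← h2, this, ← mul_assoc, ← mul_pow, mul_inv_cancel₀ hw, one_pow, one_mul]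

/-- `w^d (g(w) - ζ)` as a polynomial -/
noncomputable def QQ (b : Fin (d + 1) → ℂ) (ζ : ℂ) : ℂ[X] := YC (cj b) - C ζ * X ^ d

theorem QQ_eval (b : Fin (d + 1) → ℂ) (ζ : ℂ) {w : ℂ} (hw : w ≠ 0) :
    (QQ b ζ).eval w = w ^ d * (gg b w - ζ) := by
  unfold QQ
  rw [eval_sub, YC_cj_eval b hw]
  simp; ring

theorem QQ_coeff_top (b : Fin (d + 1) → ℂ) (ζ : ℂ) : (QQ b ζ).coeff (d + 1) = 1 := by
  unfold QQ
  rw [coeff_sub, YC_coeff_top, coeff_C_mul, coeff_X_pow, if_neg (by omega)]; simp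

theorem QQ_natDegree (b : Fin (d + 1) → ℂ) (ζ : ℂ) : (QQ b ζ).natDegree = d + 1 := by
  apply le_antisymm
  · rw [natDegree_le_iff_coeff_eq_zero]
    intro n hn
    unfold QQ
    rw [coeff_sub, YC_coeff_big _ hn, coeff_C_mul, coeff_X_pow, if_neg (by omega)]; simp
  · apply le_natDegree_of_ne_zero
    rw [QQ_coeff_top]; exact one_ne_zero

theorem QQ_ne_zero (b : Fin (d + 1) → ℂ) (ζ : ℂ) : QQ b ζ ≠ 0 := by
  intro h
  have := QQ_coeff_top b ζ
  rw [h] at this; simp at this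

theorem QQ_deriv (b : Fin (d + 1) → ℂ) (ζ : ℂ) {w : ℂ} (hw : w ≠ 0) :
    (QQ b ζ).derivative.eval w = d * w⁻¹ * (w ^ d * (gg b w - ζ)) + w ^ d * dg b w := by
  have h1 : HasDerivAt (fun w => (QQ b ζ).eval w) ((QQ b ζ).derivative.eval w) w :=
    (QQ b ζ).hasDerivAt w
  have h2 : HasDerivAt (fun w => w ^ d * (gg b w - ζ))
      (d * w ^ (d - 1) * (gg b w - ζ) + w ^ d * dg b w) w :=
    (hasDerivAt_pow d w).mul ((hasDerivAt_gg b hw).sub_const ζ)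
  have h3 : (fun w => (QQ b ζ).eval w) =ᶠ[𝓝 w] (fun w => w ^ d * (gg b w - ζ)) := by
    filter_upwards [isOpen_compl_singleton.mem_nhds hw] with z hz
    exact QQ_eval b ζ hz
  rw [h1.unique (h2.congr_of_eventuallyEq h3)]
  congr 1
  rcases d with _ | k
  · simp
  · rw [Nat.add_sub_cancel, pow_succ]; field_simp

/-- winding number -/
noncomputable def nn (b : Fin (d + 1) → ℂ) (ζ : ℂ) : ℂ :=
  (2 * Real.pi * I)⁻¹ * ∮ w in C(0, 1), dg b w * (gg b w - ζ)⁻¹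

theorem int_inv_sub {z : ℂ} (hz : ‖z‖ ≠ 1) :
    (2 * Real.pi * I)⁻¹ * (∮ w in C(0, 1), (w - z)⁻¹) = if 1 < ‖z‖ then 0 else 1 := by
  split_ifs with h
  · rw [Complex.circleIntegral_eq_zero_of_differentiable_on_off_countable zero_le_one
      (countable_empty), mul_zero]
    · intro w hw
      have : w - z ≠ 0 := by
        rw [sub_ne_zero]; rintro rfl
        simp at hw; linarith
      exact ContinuousAt.continuousWithinAt (by fun_prop (disch := assumption))
    · intro w hw
      have : w - z ≠ 0 := by
        rw [sub_ne_zero]; rintro rfl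
        simp at hw; linarith
      fun_prop (disch := assumption)
  · rw [circleIntegral.integral_sub_inv_of_mem_ball]
    · exact inv_mul_cancel₀ two_pi_I_ne_zero
    · simp
      exact lt_of_le_of_ne (not_lt.1 h) hz

theorem int_sum_inv (s : Multiset ℂ) (hs : ∀ z ∈ s, ‖z‖ ≠ 1) :
    CircleIntegrable (fun w => (s.map fun z => 1 / (w - z)).sum) 0 1 ∧
    (2 * Real.pi * I)⁻¹ * (∮ w in C(0, 1), (s.map fun z => 1 / (w - z)).sum) =
      (Multiset.card s : ℂ) - (s.countP (fun z => 1 < ‖z‖) : ℂ) := by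
  induction s using Multiset.induction with
  | empty =>
    refine ⟨?_, by simp [circleIntegral]⟩
    simp
  | cons a s ih =>
    obtain ⟨h1, h2⟩ := ih (fun z hz => hs z (Multiset.mem_cons_of_mem hz))
    have ha := hs a (Multiset.mem_cons_self a s)
    have hc : CircleIntegrable (fun w => 1 / (w - a)) 0 1 := by
      apply ContinuousOn.circleIntegrable zero_le_one
      intro w hw
      have : w - a ≠ 0 := by
        rw [sub_ne_zero]; rintro rfl
        simp at hw; exact ha hw
      exact ContinuousAt.continuousWithinAt (by fun_prop (disch := assumption))
    simp only [Multiset.map_cons, Multiset.sum_cons]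
    refine ⟨hc.add h1, ?_⟩
    rw [circleIntegral.integral_add hc h1, mul_add, h2]
    simp only [one_div]
    rw [int_inv_sub ha, Multiset.card_cons, Multiset.countP_cons]
    split_ifs <;> (push_cast; ring)

theorem nn_eq (b : Fin (d + 1) → ℂ) (ζ : ℂ) (hζ : ζ ∉ gg b '' sphere 0 1) :
    nn b ζ = 1 - ((QQ b ζ).roots.countP (fun z => 1 < ‖z‖) : ℂ) := by
  have hne : ∀ w : ℂ, ‖w‖ = 1 → gg b w - ζ ≠ 0 := by
    intro w hw h
    exact hζ ⟨w, by simp [hw], sub_eq_zero.1 h⟩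
  have hroots : ∀ z ∈ (QQ b ζ).roots, ‖z‖ ≠ 1 := by
    intro z hz h1
    have := (mem_roots'.1 hz).2
    have h0 := ne_zero_of_one_le h1.ge
    rw [IsRoot, QQ_eval b ζ h0] at this
    exact mul_ne_zero (pow_ne_zero _ h0) (hne z h1) this
  obtain ⟨hi, hs⟩ := int_sum_inv _ hroots
  have hcard : Multiset.card (QQ b ζ).roots = d + 1 := by
    rw [← QQ_natDegree b ζ, ← (IsAlgClosed.splits (QQ b ζ)).natDegree_eq_card_roots]
  have h1 : (∮ w in C(0, 1), dg b w * (gg b w - ζ)⁻¹) =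
      ∮ w in C(0, 1), (((QQ b ζ).roots.map fun z => 1 / (w - z)).sum - d * (w - 0)⁻¹) := by
    apply circleIntegral.integral_congr zero_le_one
    intro w hw
    simp at hw
    have h0 := ne_zero_of_one_le hw.ge
    have hq : (QQ b ζ).eval w ≠ 0 := by
      rw [QQ_eval b ζ h0]; exact mul_ne_zero (pow_ne_zero _ h0) (hne w hw)
    simp only
    rw [← (IsAlgClosed.splits _).eval_derivative_div_eval_of_ne_zero hq, QQ_deriv b ζ h0,
      QQ_eval b ζ h0]
    have := hne w hw
    field_simp
    ring
  have hc0 : CircleIntegrable (fun w : ℂ => d * (w - 0)⁻¹) 0 1 := by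
    simp only [sub_zero]
    exact (continuousOn_const.mul continuousOn_inv_sphere).circleIntegrable zero_le_one
  unfold nn
  rw [h1, circleIntegral.integral_sub hi hc0, mul_sub, hs, circleIntegral.integral_const_mul,
    mul_left_comm, int_inv_sub (by simp), hcard]
  rw [if_neg (by simp)]
  push_cast; ring

theorem nn_inj (b : Fin (d + 1) → ℂ) (hd : ∀ w : ℂ, 1 ≤ ‖w‖ → dg b w ≠ 0)
    (hinj : InjOn (gg b) {u | 1 ≤ ‖u‖}) (ζ : ℂ) (hζ : ζ ∉ gg b '' sphere 0 1) :
    ∃ x : ℝ, 0 ≤ x ∧ nn b ζ = x := by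
  refine ⟨1 - ((QQ b ζ).roots.countP (fun z => 1 < ‖z‖) : ℝ), ?_, ?_⟩
  · rw [sub_nonneg]
    norm_cast
    by_contra hcon
    push Not at hcon
    rw [Multiset.countP_eq_card_filter] at hcon
    set s := (QQ b ζ).roots.filter (fun z => 1 < ‖z‖) with hs
    obtain ⟨a, ha⟩ := Multiset.card_pos_iff_exists_mem.1 (by omega : 0 < Multiset.card s)
    have hmem : ∀ z ∈ s, 1 < ‖z‖ ∧ gg b z = ζ := by
      intro z hz
      rw [hs, Multiset.mem_filter] at hz
      have h0 := ne_zero_of_one_le hz.2.le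
      have := (mem_roots'.1 hz.1).2
      rw [IsRoot, QQ_eval b ζ h0] at this
      exact ⟨hz.2, sub_eq_zero.1 ((mul_eq_zero.1 this).resolve_left (pow_ne_zero _ h0))⟩
    have hall : ∀ z ∈ s, z = a := fun z hz =>
      hinj (hmem z hz).1.le (hmem a ha).1.le ((hmem z hz).2.trans (hmem a ha).2.symm)
    have hrep := Multiset.eq_replicate_card.2 hall
    have hcount : 1 < Multiset.count a (QQ b ζ).roots := by
      have h1 : Multiset.count a s ≤ Multiset.count a (QQ b ζ).roots :=
        Multiset.count_le_of_le a (Multiset.filter_le _ _)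
      rw [hrep, Multiset.count_replicate_self] at h1
      omega
    rw [count_roots, one_lt_rootMultiplicity_iff_isRoot (QQ_ne_zero b ζ)] at hcount
    have h0 := ne_zero_of_one_le (hmem a ha).1.le
    have h3 := hcount.2
    rw [IsRoot, QQ_deriv b ζ h0, (hmem a ha).2, sub_self, mul_zero, mul_zero, zero_add] at h3
    exact mul_ne_zero (pow_ne_zero _ h0) (hd a (hmem a ha).1.le) h3
  · rw [nn_eq b ζ hζ]; push_cast; rfl

theorem nn_surj (b : Fin (d + 1) → ℂ) (ζ : ℂ) (hζ : ζ ∉ gg b '' sphere 0 1)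
    (hs : ∃ u, 1 < ‖u‖ ∧ gg b u = ζ) : ∃ x : ℝ, x ≤ 0 ∧ nn b ζ = x := by
  refine ⟨1 - ((QQ b ζ).roots.countP (fun z => 1 < ‖z‖) : ℝ), ?_, ?_⟩
  · rw [sub_nonpos]
    norm_cast
    obtain ⟨u, hu, he⟩ := hs
    rw [Nat.one_le_iff_ne_zero, ← Nat.pos_iff_ne_zero, Multiset.countP_pos]
    refine ⟨u, ?_, hu⟩
    rw [mem_roots (QQ_ne_zero b ζ), IsRoot, QQ_eval b ζ (ne_zero_of_one_le hu.le), he, sub_self,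
      mul_zero]
  · rw [nn_eq b ζ hζ]; push_cast; rfl

end PolyCurve

end

section

open Complex
open Filter Topology Metric Set MeasureTheory

namespace PolyCurve
variable {d : ℕ}

theorem integrableOn_norm_inv (z : ℂ) (ρ : ℝ) :
    IntegrableOn (fun ζ : ℂ => (z - ζ)⁻¹) (ball 0 ρ) := by
  have h1 : IntegrableOn (fun ζ : ℂ => ζ⁻¹) (ball 0 (‖z‖ + ρ)) := by
    refine integrableOn_ball_of_norm_le_rpow (C := 1) (α := 1) ?_ ?_ ?_ ?_
    · rw [Complex.finrank_real_complex]; norm_num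
    · rw [Complex.finrank_real_complex]; norm_num
    · filter_upwards with x
      rw [norm_inv, Real.rpow_neg_one, one_mul]
    · exact (measurable_id.inv).aestronglyMeasurable
  have h2 : IntegrableOn (fun ζ : ℂ => (z - ζ)⁻¹) ((fun ζ => z - ζ) ⁻¹' (ball 0 (‖z‖ + ρ))) := by
    have hmp : MeasurePreserving (fun ζ : ℂ => z - ζ) volume volume :=
      Measure.measurePreserving_sub_left volume z
    have hme : MeasurableEmbedding (fun ζ : ℂ => z - ζ) :=
      (MeasurableEquiv.subLeft z).measurableEmbedding
    exact (hmp.integrableOn_comp_preimage hme).2 h1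
  apply h2.mono_set
  intro ζ hζ
  simp at hζ ⊢
  exact (norm_sub_le _ _).trans_lt (by linarith)

theorem setIntegral_norm_inv_le (z : ℂ) {ρ : ℝ} (hz : ‖z‖ ≤ ρ) :
    ∫ ζ in ball (0:ℂ) ρ, ‖(z - ζ)⁻¹‖ ≤ ∫ ζ in ball (0:ℂ) (2 * ρ), ‖ζ⁻¹‖ := by
  have hmp : MeasurePreserving (fun ζ : ℂ => z - ζ) volume volume :=
    Measure.measurePreserving_sub_left volume z
  have hme : MeasurableEmbedding (fun ζ : ℂ => z - ζ) :=
    (MeasurableEquiv.subLeft z).measurableEmbedding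
  rw [← hmp.setIntegral_preimage_emb hme (fun ζ => ‖ζ⁻¹‖)]
  apply setIntegral_mono_set
  · have h1 : IntegrableOn (fun ζ : ℂ => ζ⁻¹) (ball 0 (2 * ρ)) := by
      have := (integrableOn_norm_inv 0 (2 * ρ)).neg
      refine this.congr ?_
      filter_upwards with ζ
      simp [inv_neg]
    exact ((hmp.integrableOn_comp_preimage hme).2 h1).norm
  · filter_upwards with ζ
    exact norm_nonneg _
  · apply LE.le.eventuallyLE
    intro ζ hζ
    simp at hζ ⊢
    exact (norm_sub_le _ _).trans_lt (by linarith)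

theorem angle_integral (z : ℂ) {r : ℝ} (hr : 0 < r) (hrz : r ≠ ‖z‖) :
    ∫ θ in Ioo (-Real.pi) Real.pi, (z - r * (Real.cos θ + Real.sin θ * I))⁻¹ =
      if r < ‖z‖ then 2 * Real.pi * z⁻¹ else 0 := by
  have hpi := Real.pi_pos
  have h0 : ∫ θ in Ioo (-Real.pi) Real.pi, (z - r * (Real.cos θ + Real.sin θ * I))⁻¹ =
      ∫ θ in (-Real.pi)..Real.pi, (z - r * cexp (θ * I))⁻¹ := by
    rw [intervalIntegral.integral_of_le (by linarith), integral_Ioc_eq_integral_Ioo]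
    congr 1
    ext θ
    rw [exp_mul_I]; push_cast; rfl
  have hper : Function.Periodic (fun θ : ℝ => (z - r * cexp (θ * I))⁻¹) (2 * Real.pi) := by
    intro θ
    simp only
    congr 3
    push_cast
    rw [add_mul, Complex.exp_add, Complex.exp_two_pi_mul_I, mul_one]
  have h1 := hper.intervalIntegral_add_eq (-Real.pi) 0
  rw [show -Real.pi + 2 * Real.pi = Real.pi by ring, zero_add] at h1
  rw [h0, h1]
  have h2 : ∫ θ in (0:ℝ)..2 * Real.pi, (z - r * cexp (θ * I))⁻¹ =
      I⁻¹ * ∮ w in C(0, 1), w⁻¹ * (z - r * w)⁻¹ := by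
    unfold circleIntegral
    rw [← intervalIntegral.integral_const_mul]
    congr 1
    ext θ
    simp only [deriv_circleMap, circleMap, smul_eq_mul]
    have := Complex.exp_ne_zero (θ * I)
    have hI := I_ne_zero
    push_cast
    field_simp
    ring_nf
  rw [h2]
  split_ifs with h
  · have hd : ∀ w : ℂ, ‖w‖ ≤ 1 → z - r * w ≠ 0 := by
      intro w hw h0
      rw [sub_eq_zero] at h0
      rw [h0, norm_mul, Complex.norm_real, Real.norm_of_nonneg hr.le] at h
      nlinarith
    have := Complex.circleIntegral_sub_center_inv_smul_of_differentiable_on_off_countable (R := 1)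
      (c := 0) (s := ∅) (f := fun w => (z - r * w)⁻¹) one_pos countable_empty ?_ ?_
    · simp only [sub_zero, smul_eq_mul, mul_zero] at this
      rw [this]; field_simp
    · intro w hw
      have := hd w (by simpa using hw)
      exact ContinuousAt.continuousWithinAt (by fun_prop (disch := assumption))
    · intro w hw
      have hw' : ‖w‖ < 1 := by simpa using hw
      have := hd w hw'.le
      fun_prop (disch := assumption)
  · have hlt : ‖z‖ < r := lt_of_le_of_ne (not_lt.1 h) (Ne.symm hrz)
    rw [circle_ext (L := 0), mul_zero, mul_zero]
    · intro w hw
      have h0 := ne_zero_of_one_le hw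
      have : z - r * w ≠ 0 := by
        intro h0
        rw [sub_eq_zero] at h0
        rw [h0, norm_mul, Complex.norm_real, Real.norm_of_nonneg hr.le] at hlt
        nlinarith
      fun_prop (disch := assumption)
    · have ht : Tendsto (fun w : ℂ => z - r * w) (Bornology.cobounded ℂ) (Bornology.cobounded ℂ) := by
        rw [← tendsto_norm_atTop_iff_cobounded]
        have ha : Tendsto (fun w : ℂ => r * ‖w‖ - ‖z‖) (Bornology.cobounded ℂ) atTop :=
          tendsto_atTop_add_const_right _ _ ((tendsto_norm_cobounded_atTop (E := ℂ)).const_mul_atTop hr)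
        apply tendsto_atTop_mono _ ha
        intro w
        have := norm_sub_norm_le (r * w) z
        rw [norm_mul, Complex.norm_real, Real.norm_of_nonneg hr.le] at this
        rw [norm_sub_rev]; exact this
      have := tendsto_inv_cob.comp ht
      refine this.congr' ?_
      filter_upwards [eventually_ne_cob] with w hw
      simp only [Function.comp]
      field_simp

theorem polar_integrable {f : ℂ → ℂ} (hm : Measurable f) (hf : Integrable f) :
    IntegrableOn (fun p : ℝ × ℝ => p.1 • f (Complex.polarCoord.symm p)) polarCoord.target := by
  have hmeas : Measurable (fun p : ℝ × ℝ => Complex.polarCoord.symm p) := by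
    have : Continuous (fun p : ℝ × ℝ => Complex.polarCoord.symm p) := by
      simp only [Complex.polarCoord_symm_apply]
      fun_prop
    exact this.measurable
  refine ⟨(measurable_fst.smul (hm.comp hmeas)).aestronglyMeasurable, ?_⟩
  rw [hasFiniteIntegral_iff_enorm]
  have h := Complex.lintegral_comp_polarCoord_symm (fun ζ => ‖f ζ‖ₑ)
  have h2 : ∫⁻ p in polarCoord.target, ‖p.1 • f (Complex.polarCoord.symm p)‖ₑ =
      ∫⁻ p in polarCoord.target, ENNReal.ofReal p.1 • ‖f (Complex.polarCoord.symm p)‖ₑ := by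
    apply setLIntegral_congr_fun polarCoord.open_target.measurableSet
    intro p hp
    have hp1 : 0 < p.1 := hp.1
    simp only [enorm_smul, smul_eq_mul]
    rw [Real.enorm_of_nonneg hp1.le]
  rw [h2, h]
  exact hf.2

theorem cauchy_transform (z : ℂ) {ρ : ℝ} (hz : ‖z‖ < ρ) :
    ∫ ζ in ball (0:ℂ) ρ, (z - ζ)⁻¹ = Real.pi * (starRingEnd ℂ) z := by
  set f : ℂ → ℂ := (ball (0:ℂ) ρ).indicator (fun ζ => (z - ζ)⁻¹) with hf
  have hfm : Measurable f :=
    ((measurable_const.sub measurable_id).inv).indicator measurableSet_ball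
  have hfi : Integrable f :=
    (integrable_indicator_iff measurableSet_ball).2 (integrableOn_norm_inv z ρ)
  have h1 : ∫ ζ in ball (0:ℂ) ρ, (z - ζ)⁻¹ = ∫ ζ, f ζ := (integral_indicator measurableSet_ball).symm
  have hpi := polar_integrable hfm hfi
  rw [h1, ← Complex.integral_comp_polarCoord_symm]
  rw [show polarCoord.target = Ioi (0:ℝ) ×ˢ Ioo (-Real.pi) Real.pi from rfl] at hpi ⊢
  rw [Measure.volume_eq_prod] at hpi ⊢
  rw [setIntegral_prod _ hpi]
  have h2 : ∫ r in Ioi (0:ℝ), ∫ θ in Ioo (-Real.pi) Real.pi, r • f (Complex.polarCoord.symm (r, θ)) =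
      ∫ r in Ioi (0:ℝ), (Ioo (0:ℝ) ‖z‖).indicator (fun r : ℝ => (r : ℂ) * (2 * Real.pi * z⁻¹)) r := by
    apply setIntegral_congr_ae measurableSet_Ioi
    have hne : ∀ᵐ r : ℝ, r ≠ ‖z‖ := by
      rw [ae_iff]; simp
    filter_upwards [hne] with r hr hr0
    have hr0' : 0 < r := hr0
    by_cases hρ : r < ρ
    · have : ∀ θ : ℝ, r • f (Complex.polarCoord.symm (r, θ)) =
          (r : ℂ) * (z - r * (Real.cos θ + Real.sin θ * I))⁻¹ := by
        intro θ
        rw [hf, indicator_of_mem]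
        · simp
        · rw [mem_ball_zero_iff, Complex.norm_polarCoord_symm, abs_of_pos hr0']; exact hρ
      simp only [this]
      rw [integral_const_mul, angle_integral z hr0' hr]
      by_cases hlt : r < ‖z‖
      · rw [if_pos hlt, indicator_of_mem (show r ∈ Ioo (0:ℝ) ‖z‖ from ⟨hr0', hlt⟩)]
      · rw [if_neg hlt, indicator_of_notMem (fun h => hlt h.2), mul_zero]
    · have : ∀ θ : ℝ, r • f (Complex.polarCoord.symm (r, θ)) = 0 := by
        intro θ
        rw [hf, indicator_of_notMem, smul_zero]
        rw [mem_ball_zero_iff, Complex.norm_polarCoord_symm, abs_of_pos hr0']; exact hρ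
      simp only [this]
      rw [indicator_of_notMem (fun h => hρ (h.2.trans hz)), integral_zero]
  rw [h2, setIntegral_indicator measurableSet_Ioo,
    inter_eq_self_of_subset_right (Ioo_subset_Ioi_self : Ioo (0:ℝ) ‖z‖ ⊆ Ioi 0),
    integral_mul_const, ← integral_Ioc_eq_integral_Ioo, ← intervalIntegral.integral_of_le (norm_nonneg z),
    intervalIntegral.integral_ofReal, integral_id]
  rcases eq_or_ne z 0 with rfl | h0
  · simp
  · have : (starRingEnd ℂ) z = z⁻¹ * ‖z‖ ^ 2 := by
      rw [Complex.inv_def, Complex.normSq_eq_norm_sq]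
      have : (‖z‖ : ℂ) ≠ 0 := by simpa using h0
      push_cast
      field_simp
    rw [this]
    push_cast
    ring

end PolyCurve

end

section

open Complex
open Filter Topology Metric Set MeasureTheory

namespace PolyCurve
variable {d : ℕ}

theorem continuous_gg_circle (b : Fin (d + 1) → ℂ) : Continuous (fun θ : ℝ => gg b (circleMap 0 1 θ)) := by
  apply (continuousOn_gg_sphere b).comp_continuous (continuous_circleMap 0 1)
  intro θ; simp

theorem continuous_dg_circle (b : Fin (d + 1) → ℂ) : Continuous (fun θ : ℝ => dg b (circleMap 0 1 θ)) := by
  apply (continuousOn_dg_sphere b).comp_continuous (continuous_circleMap 0 1)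
  intro θ; simp

/-- weight -/
noncomputable def wt (b : Fin (d + 1) → ℂ) (m : ℕ) (θ : ℝ) : ℂ :=
  deriv (circleMap 0 1) θ * (gg b (circleMap 0 1 θ) ^ m * dg b (circleMap 0 1 θ))

theorem continuous_wt (b : Fin (d + 1) → ℂ) (m : ℕ) : Continuous (wt b m) := by
  unfold wt
  simp only [deriv_circleMap]
  exact ((continuous_circleMap 0 1).mul continuous_const).mul
    (((continuous_gg_circle b).pow m).mul (continuous_dg_circle b))

theorem fubini_integrable (b : Fin (d + 1) → ℂ) (m : ℕ) {ρ : ℝ} (hρ : ∀ w : ℂ, ‖w‖ = 1 → ‖gg b w‖ < ρ) :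
    Integrable (fun x : ℝ × ℂ => wt b m x.1 * (gg b (circleMap 0 1 x.1) - x.2)⁻¹)
      ((volume.restrict (Ioc 0 (2 * Real.pi))).prod (volume.restrict (ball (0:ℂ) ρ))) := by
  have hmeas : Measurable (fun x : ℝ × ℂ => wt b m x.1 * (gg b (circleMap 0 1 x.1) - x.2)⁻¹) :=
    ((continuous_wt b m).measurable.comp measurable_fst).mul
      ((((continuous_gg_circle b).measurable.comp measurable_fst).sub measurable_snd).inv)
  rw [integrable_prod_iff hmeas.aestronglyMeasurable]
  constructor
  · filter_upwards with θ
    exact (integrableOn_norm_inv _ ρ).const_mul _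
  · obtain ⟨M, hM⟩ := (isCompact_Icc (a := (0:ℝ)) (b := 2 * Real.pi)).exists_bound_of_continuousOn
      (continuous_wt b m).continuousOn
    have hA : AEStronglyMeasurable (fun θ : ℝ => ∫ ζ, ‖wt b m θ * (gg b (circleMap 0 1 θ) - ζ)⁻¹‖
        ∂(volume.restrict (ball (0:ℂ) ρ))) (volume.restrict (Ioc 0 (2 * Real.pi))) :=
      hmeas.aestronglyMeasurable.norm.integral_prod_right'
    have hfin : IntegrableOn (fun _ : ℝ => M * ∫ ζ in ball (0:ℂ) (2 * ρ), ‖ζ⁻¹‖)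
        (Ioc 0 (2 * Real.pi)) := by
      exact integrableOn_const (by rw [Real.volume_Ioc]; exact ENNReal.ofReal_ne_top)
    refine Integrable.mono' hfin hA ?_
    rw [ae_restrict_iff' measurableSet_Ioc]
    filter_upwards with θ hθ
    have h1 := setIntegral_norm_inv_le (gg b (circleMap 0 1 θ)) (ρ := ρ) (hρ _ (by simp)).le
    have h2 := hM θ ⟨hθ.1.le, hθ.2⟩
    simp only [norm_mul]
    rw [integral_const_mul, norm_mul, norm_norm, Real.norm_of_nonneg]
    · exact mul_le_mul h2 h1 (integral_nonneg fun _ => norm_nonneg _) ((norm_nonneg _).trans h2)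
    · exact integral_nonneg fun _ => norm_nonneg _

theorem int_pow_div (b : Fin (d + 1) → ℂ) (m : ℕ) (ζ : ℂ) (hζ : ζ ∉ gg b '' sphere 0 1) :
    (2 * Real.pi * I)⁻¹ * (∮ w in C(0, 1), gg b w ^ m * dg b w * (gg b w - ζ)⁻¹) = ζ ^ m * nn b ζ := by
  have hne : ∀ w : ℂ, ‖w‖ = 1 → gg b w - ζ ≠ 0 := by
    intro w hw h
    exact hζ ⟨w, by simp [hw], sub_eq_zero.1 h⟩
  have hcont : ContinuousOn (fun w => dg b w * (gg b w - ζ)⁻¹) (sphere 0 1) :=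
    (continuousOn_dg_sphere b).mul (((continuousOn_gg_sphere b).sub continuousOn_const).inv₀
      fun w hw => hne w (by simpa using hw))
  have h1 : (∮ w in C(0, 1), gg b w ^ m * dg b w * (gg b w - ζ)⁻¹) =
      ∮ w in C(0, 1), ((∑ i ∈ Finset.range m, ζ ^ (m - 1 - i) * (gg b w ^ i * dg b w)) +
        ζ ^ m * (dg b w * (gg b w - ζ)⁻¹)) := by
    apply circleIntegral.integral_congr zero_le_one
    intro w hw
    have hw' : ‖w‖ = 1 := by simpa using hw
    have h := geom_sum₂_mul (gg b w) ζ m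
    have h2 : gg b w ^ m = (∑ i ∈ Finset.range m, gg b w ^ i * ζ ^ (m - 1 - i)) * (gg b w - ζ) + ζ ^ m := by
      rw [h]; ring
    have h3 : (∑ i ∈ Finset.range m, ζ ^ (m - 1 - i) * (gg b w ^ i * dg b w)) =
        (∑ i ∈ Finset.range m, gg b w ^ i * ζ ^ (m - 1 - i)) * dg b w := by
      rw [Finset.sum_mul]
      exact Finset.sum_congr rfl fun i _ => by ring
    simp only
    rw [h3, h2]
    have := hne w hw'
    field_simp
  have hci : ∀ i ∈ Finset.range m, CircleIntegrable (fun w => ζ ^ (m - 1 - i) * (gg b w ^ i * dg b w)) 0 1 := by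
    intro i _
    exact (continuousOn_const.mul (((continuousOn_gg_sphere b).pow i).mul
      (continuousOn_dg_sphere b))).circleIntegrable zero_le_one
  rw [h1, circleIntegral.integral_add]
  · rw [circleIntegral.integral_fun_sum hci, Finset.sum_eq_zero, zero_add, circleIntegral.integral_const_mul,
      mul_left_comm]
    · rfl
    · intro i _
      rw [circleIntegral.integral_const_mul, int_pow, mul_zero]
  · apply ContinuousOn.circleIntegrable zero_le_one
    apply continuousOn_finsetSum
    intro i _
    exact continuousOn_const.mul (((continuousOn_gg_sphere b).pow i).mul
      (continuousOn_dg_sphere b))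
  · exact (continuousOn_const.mul hcont).circleIntegrable zero_le_one

theorem curve_null (b : Fin (d + 1) → ℂ) : volume (gg b '' sphere 0 1) = 0 := by
  apply addHaar_image_eq_zero_of_differentiableOn_of_addHaar_eq_zero
  · intro w hw
    have hw' : ‖w‖ = 1 := by simpa using hw
    exact ((differentiableAt_gg b (ne_zero_of_one_le hw'.ge)).restrictScalars ℝ).differentiableWithinAt
  · exact Measure.addHaar_sphere _ _ _

theorem Vm_eq (b : Fin (d + 1) → ℂ) (m : ℕ) {ρ : ℝ} (hρ : ∀ w : ℂ, ‖w‖ = 1 → ‖gg b w‖ < ρ) :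
    IntegrableOn (fun ζ => ζ ^ m * nn b ζ) (ball 0 ρ) ∧
      Real.pi * Vm b m = ∫ ζ in ball (0:ℂ) ρ, ζ ^ m * nn b ζ := by
  have hF := fubini_integrable b m hρ
  have hae : ∀ᵐ ζ ∂(volume.restrict (ball (0:ℂ) ρ)),
      (2 * Real.pi * I)⁻¹ * (∫ θ in Ioc 0 (2 * Real.pi), wt b m θ * (gg b (circleMap 0 1 θ) - ζ)⁻¹) =
        ζ ^ m * nn b ζ := by
    apply ae_restrict_of_ae
    have h0 : ∀ᵐ ζ : ℂ, ζ ∉ gg b '' sphere 0 1 := by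
      rw [ae_iff]
      simp only [not_not]
      exact curve_null b
    filter_upwards [h0] with ζ hζ
    rw [← int_pow_div b m ζ hζ]
    congr 1
    unfold circleIntegral
    rw [intervalIntegral.integral_of_le (by positivity)]
    congr 1
    ext θ
    simp only [wt, smul_eq_mul]
    ring
  refine ⟨?_, ?_⟩
  · refine (hF.integral_prod_right.const_mul ((2 * Real.pi * I)⁻¹)).congr ?_
    exact hae
  · rw [← integral_congr_ae hae, integral_const_mul, ← integral_integral_swap (f := fun θ ζ =>
      wt b m θ * (gg b (circleMap 0 1 θ) - ζ)⁻¹) hF]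
    unfold Vm
    rw [mul_left_comm]
    congr 1
    unfold circleIntegral
    rw [← intervalIntegral.integral_const_mul, intervalIntegral.integral_of_le (by positivity)]
    congr 1
    ext θ
    have hn : ‖circleMap 0 1 θ‖ = 1 := by simp
    rw [integral_const_mul, cauchy_transform _ (hρ _ hn), conj_gg b hn]
    simp only [wt, smul_eq_mul]
    ring

theorem Vm_bound (b : Fin (d + 1) → ℂ) (hd : ∀ w : ℂ, 1 ≤ ‖w‖ → dg b w ≠ 0)
    (hinj : InjOn (gg b) (sphere 0 1)) (hN : 0 < 1 - Nb b) {ρ : ℝ}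
    (hρ : ∀ w : ℂ, ‖w‖ = 1 → ‖gg b w‖ < ρ) (m : ℕ) : ‖Vm b m‖ ≤ (1 - Nb b) * ρ ^ m := by
  have hpi := Real.pi_pos
  have h0 : ∀ᵐ ζ ∂(volume.restrict (ball (0:ℂ) ρ)), ζ ∉ gg b '' sphere 0 1 := by
    apply ae_restrict_of_ae
    rw [ae_iff]
    simp only [not_not]
    exact curve_null b
  obtain ⟨hi0, he0⟩ := Vm_eq b 0 hρ
  simp only [pow_zero, one_mul] at hi0 he0
  rw [Vm_zero] at he0
  have hre : Real.pi * (1 - Nb b) = ∫ ζ in ball (0:ℂ) ρ, (nn b ζ).re := by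
    have := congrArg re he0
    rw [← Complex.ofReal_mul, ofReal_re] at this
    rw [this]
    exact (reCLM.integral_comp_comm hi0).symm
  rcases dichotomy b hd hinj with h | h
  · obtain ⟨hi, he⟩ := Vm_eq b m hρ
    have h1 : ‖∫ ζ in ball (0:ℂ) ρ, ζ ^ m * nn b ζ‖ ≤ ∫ ζ in ball (0:ℂ) ρ, ρ ^ m * (nn b ζ).re := by
      apply norm_integral_le_of_norm_le (hi0.re.const_mul _)
      filter_upwards [h0, ae_restrict_mem measurableSet_ball] with ζ hζ hb
      obtain ⟨x, hx, hxe⟩ := nn_inj b hd h ζ hζ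
      rw [hxe, norm_mul, norm_pow, Complex.norm_real, Real.norm_of_nonneg hx]
      show ‖ζ‖ ^ m * x ≤ ρ ^ m * x
      have : ‖ζ‖ < ρ := by simpa using hb
      gcongr
    rw [← he, integral_const_mul, ← hre, norm_mul, Complex.norm_real, Real.norm_of_nonneg hpi.le] at h1
    have : Real.pi * ‖Vm b m‖ ≤ Real.pi * ((1 - Nb b) * ρ ^ m) := by linarith
    exact le_of_mul_le_mul_left this hpi
  · exfalso
    have : ∫ ζ in ball (0:ℂ) ρ, (nn b ζ).re ≤ 0 := by
      apply integral_nonpos_of_ae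
      filter_upwards [h0] with ζ hζ
      obtain ⟨x, hx, hxe⟩ := nn_surj b ζ hζ (h ζ)
      rw [hxe, ofReal_re]
      exact hx
    nlinarith

end PolyCurve

end

section

open Complex
open Filter Topology Metric Set MeasureTheory

namespace PolyCurve
variable {d : ℕ}

theorem YY_zero_of_Vm (b p : Fin (d + 1) → ℂ) (hY : ∀ k < d + 1, (YY b p).coeff k = 0)
    (hV : ∀ m, Vm b m = 0) : YY b p = 0 := by
  have key : ∀ n, (YY b p).coeff n = 0 := by
    intro n
    induction n using Nat.strong_induction_on with
    | _ n ih =>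
      rcases Nat.lt_or_ge n (d + 1) with h | h
      · exact hY n h
      · obtain ⟨m, rfl⟩ := Nat.exists_eq_add_of_le h
        have ht := tendsto_EE b p _ ih
        have hz : (((d + 1 + m : ℕ) : ℤ) - d - 1) = (m : ℤ) := by push_cast; ring
        simp only [hz, zpow_natCast] at ht
        have hc := circle_ext (f := fun w => EE b p w * gg b w ^ m * dg b w) (fun w hw => by
          have h0 := ne_zero_of_one_le hw
          have h1 := differentiableAt_gg b h0
          have h2 := differentiableAt_EE b p h0
          have h3 := differentiableAt_dg b h0
          fun_prop) ht
        have hci : ∀ i : Fin (d + 1), ContinuousOn (fun w => p i * (gg b w ^ ((i : ℕ) + m) * dg b w)) (sphere 0 1) :=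
          fun i => continuousOn_const.mul (((continuousOn_gg_sphere b).pow _).mul
            (continuousOn_dg_sphere b))
        have h1 : (∮ w in C(0, 1), EE b p w * gg b w ^ m * dg b w) =
            ∮ w in C(0, 1), (gc b w * gg b w ^ m * dg b w -
              ∑ i : Fin (d + 1), p i * (gg b w ^ ((i : ℕ) + m) * dg b w)) := by
          apply circleIntegral.integral_congr zero_le_one
          intro w _
          simp only [EE, PP]
          rw [sub_mul, sub_mul, Finset.sum_mul, Finset.sum_mul]
          congr 1
          apply Finset.sum_congr rfl
          intro i _
          rw [pow_add]; ring
        have hV' := hV m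
        unfold Vm at hV'
        have hV'' := (mul_eq_zero.1 hV').resolve_left (inv_ne_zero two_pi_I_ne_zero)
        rw [h1, circleIntegral.integral_sub, hV'', circleIntegral.integral_fun_sum, Finset.sum_eq_zero,
          sub_zero] at hc
        · exact (mul_eq_zero.1 hc.symm).resolve_left two_pi_I_ne_zero
        · intro i _
          rw [circleIntegral.integral_const_mul, int_pow, mul_zero]
        · exact fun i _ => (hci i).circleIntegrable zero_le_one
        · exact (((continuousOn_gc_sphere b).mul ((continuousOn_gg_sphere b).pow m)).mul
            (continuousOn_dg_sphere b)).circleIntegrable zero_le_one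
        · exact (continuousOn_finsetSum _ fun i _ => hci i).circleIntegrable zero_le_one
  ext n
  rw [key n]; simp

theorem continuous_circle_param {X : Type*} [TopologicalSpace X] [FirstCountableTopology X]
    {F : X → ℂ → ℂ}
    (hF : Continuous (fun x : X × ℝ => F x.1 (circleMap 0 1 x.2))) :
    Continuous (fun x => ∮ w in C(0, 1), F x w) := by
  unfold circleIntegral
  apply intervalIntegral.continuous_parametric_intervalIntegral_of_continuous'
  simp only [deriv_circleMap, smul_eq_mul]
  exact (((continuous_circleMap 0 1).comp continuous_snd).mul continuous_const).mul hF

theorem continuous_inv_circle : Continuous (fun θ : ℝ => (circleMap 0 1 θ)⁻¹) := by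
  apply (continuous_circleMap 0 1).inv₀
  intro θ
  exact circleMap_ne_center one_ne_zero

theorem continuous_gg_joint : Continuous (fun x : (Fin (d + 1) → ℂ) × ℝ => gg x.1 (circleMap 0 1 x.2)) := by
  have h1 := continuous_inv_circle.comp (continuous_snd (X := Fin (d + 1) → ℂ) (Y := ℝ))
  have h2 := (continuous_circleMap 0 1).comp (continuous_snd (X := Fin (d + 1) → ℂ) (Y := ℝ))
  simp only [Function.comp_def] at h1 h2
  unfold gg
  fun_prop

theorem continuous_dg_joint : Continuous (fun x : (Fin (d + 1) → ℂ) × ℝ => dg x.1 (circleMap 0 1 x.2)) := by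
  have h1 := continuous_inv_circle.comp (continuous_snd (X := Fin (d + 1) → ℂ) (Y := ℝ))
  simp only [Function.comp_def] at h1
  unfold dg
  fun_prop

theorem continuous_gc_joint : Continuous (fun x : (Fin (d + 1) → ℂ) × ℝ => gc x.1 (circleMap 0 1 x.2)) := by
  have h1 := continuous_inv_circle.comp (continuous_snd (X := Fin (d + 1) → ℂ) (Y := ℝ))
  have h2 := (continuous_circleMap 0 1).comp (continuous_snd (X := Fin (d + 1) → ℂ) (Y := ℝ))
  simp only [Function.comp_def] at h1 h2
  unfold gc
  refine h1.add (continuous_finsetSum _ fun j _ => ?_)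
  exact (Complex.continuous_conj.comp (by fun_prop)).mul (h2.pow _)

theorem continuous_Vm (m : ℕ) : Continuous (fun b : Fin (d + 1) → ℂ => Vm b m) := by
  unfold Vm
  apply continuous_const.mul
  apply continuous_circle_param
  exact (continuous_gc_joint.mul (continuous_gg_joint.pow m)).mul continuous_dg_joint

theorem continuous_Lc (j : ℕ) :
    Continuous (fun x : (Fin (d + 1) → ℂ) × (Fin (d + 1) → ℂ) => Lc j (fun w => PP x.2 (gg x.1 w))) := by
  unfold Lc
  apply continuous_const.mul
  apply continuous_circle_param
  have h1 := continuous_inv_circle.comp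
    (continuous_snd (X := (Fin (d + 1) → ℂ) × (Fin (d + 1) → ℂ)) (Y := ℝ))
  have h2 : Continuous (fun x : ((Fin (d + 1) → ℂ) × (Fin (d + 1) → ℂ)) × ℝ =>
      gg x.1.1 (circleMap 0 1 x.2)) :=
    continuous_gg_joint.comp ((continuous_fst.comp continuous_fst).prodMk continuous_snd)
  simp only [Function.comp_def] at h1
  unfold PP
  fun_prop

theorem continuous_Nb : Continuous (fun b : Fin (d + 1) → ℂ => Nb b) := by
  unfold Nb; fun_prop

theorem gg_sub_le (b : Fin (d + 1) → ℂ) {C : ℝ} (hb : ∀ j, ‖b j‖ ≤ C) {w : ℂ} (hw : 1 ≤ ‖w‖) :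
    ‖gg b w - w‖ ≤ (d + 1) * C := by
  unfold gg
  rw [add_sub_cancel_left]
  refine (norm_sum_le _ _).trans ?_
  have : ∀ j ∈ Finset.univ, ‖b j * (w⁻¹) ^ ((j : Fin (d + 1)) : ℕ)‖ ≤ C := by
    intro j _
    rw [norm_mul, norm_pow, norm_inv]
    have h1 : (‖w‖⁻¹) ^ (j : ℕ) ≤ 1 := pow_le_one₀ (by positivity) (inv_le_one_of_one_le₀ hw)
    have h2 := hb j
    calc ‖b j‖ * (‖w‖⁻¹) ^ (j : ℕ) ≤ ‖b j‖ * 1 := by gcongr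
      _ ≤ C := by linarith
  refine (Finset.sum_le_sum this).trans ?_
  simp

theorem Mk_bound (d : ℕ) (C : ℝ) (hC : 0 ≤ C) : ∃ C' : ℝ, ∀ b : Fin (d + 1) → ℂ,
    (∀ w : ℂ, 1 ≤ ‖w‖ → gg b w ≠ 0) → (∀ j, ‖b j‖ ≤ C) → ∀ k, ‖Mk b k‖ ≤ C' := by
  set R : ℝ := (d + 1) * C + 2 with hR
  have hR1 : 1 ≤ R := by rw [hR]; nlinarith [(Nat.cast_nonneg d : (0:ℝ) ≤ d)]
  refine ⟨R * ((1 + (d + 1) * (C * R ^ d)) * (1 + (d + 1) * (d * C))), ?_⟩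
  intro b hg hb k
  have hshift : (∮ w in C(0, 1), gc b w * gg b w ^ (-(k : ℤ)) * dg b w) =
      ∮ w in C(0, R), gc b w * gg b w ^ (-(k : ℤ)) * dg b w := by
    have hdiff : ∀ w : ℂ, 1 ≤ ‖w‖ → DifferentiableAt ℂ (fun w => gc b w * gg b w ^ (-(k : ℤ)) * dg b w) w := by
      intro w hw
      have h0 := ne_zero_of_one_le hw
      exact ((differentiableAt_gc b h0).mul ((differentiableAt_gg b h0).zpow (Or.inl (hg w hw)))).mul
        (differentiableAt_dg b h0)
    symm
    apply Complex.circleIntegral_eq_of_differentiable_on_annulus_off_countable one_pos hR1 countable_empty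
    · intro w hw
      refine (hdiff w ?_).continuousAt.continuousWithinAt
      have := hw.2
      simpa using this
    · intro w hw
      refine hdiff w ?_
      have := hw.1.2
      simp at this
      exact this.le
  unfold Mk
  rw [hshift]
  have hRd : 0 ≤ R := by linarith
  have := circleIntegral.norm_two_pi_i_inv_smul_integral_le_of_norm_le_const
    (f := fun w => gc b w * gg b w ^ (-(k : ℤ)) * dg b w) (c := 0) (R := R)
    (C := (1 + (d + 1) * (C * R ^ d)) * (1 + (d + 1) * (d * C))) hRd ?_
  · simpa [smul_eq_mul] using this
  · intro w hw
    have hw' : ‖w‖ = R := by simpa using hw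
    have hw1 : 1 ≤ ‖w‖ := by rw [hw']; exact hR1
    have hinv : ‖w‖⁻¹ ≤ 1 := inv_le_one_of_one_le₀ hw1
    have h1 : ‖gc b w‖ ≤ 1 + (d + 1) * (C * R ^ d) := by
      unfold gc
      refine (norm_add_le _ _).trans (add_le_add (by rw [norm_inv]; exact hinv) ?_)
      refine (norm_sum_le _ _).trans ?_
      have : ∀ j ∈ Finset.univ, ‖(starRingEnd ℂ) (b j) * w ^ ((j : Fin (d + 1)) : ℕ)‖ ≤ C * R ^ d := by
        intro j _
        rw [norm_mul, Complex.norm_conj, norm_pow, hw']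
        have := hb j
        have : R ^ (j : ℕ) ≤ R ^ d := pow_le_pow_right₀ hR1 (by omega)
        gcongr
      refine (Finset.sum_le_sum this).trans ?_
      simp
    have h2 : ‖dg b w‖ ≤ 1 + (d + 1) * (d * C) := by
      unfold dg
      refine (norm_sub_le _ _).trans (add_le_add (by simp) ?_)
      refine (norm_sum_le _ _).trans ?_
      have : ∀ j ∈ (Finset.univ : Finset (Fin (d + 1))), ‖((j : ℕ) : ℂ) * b j * (w⁻¹) ^ ((j : ℕ) + 1)‖ ≤ d * C := by
        intro j _
        rw [norm_mul, norm_mul, norm_pow, norm_inv, Complex.norm_natCast]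
        have h1 : (‖w‖⁻¹) ^ ((j : ℕ) + 1) ≤ 1 := pow_le_one₀ (by positivity) hinv
        have h2 := hb j
        have h3 : ((j : ℕ) : ℝ) ≤ d := by exact_mod_cast (by omega)
        calc ((j : ℕ) : ℝ) * ‖b j‖ * (‖w‖⁻¹) ^ ((j : ℕ) + 1) ≤ d * C * 1 := by gcongr
          _ = d * C := mul_one _
      refine (Finset.sum_le_sum this).trans ?_
      simp
    have h3 : ‖gg b w ^ (-(k : ℤ))‖ ≤ 1 := by
      rw [zpow_neg, zpow_natCast, norm_inv, norm_pow]
      apply inv_le_one_of_one_le₀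
      apply one_le_pow₀
      have := gg_sub_le b hb hw1
      have h4 := norm_sub_norm_le w (gg b w)
      rw [norm_sub_rev] at h4
      rw [hw'] at h4
      linarith
    rw [norm_mul, norm_mul]
    have h5 : 0 ≤ 1 + (d + 1) * (C * R ^ d) := by positivity
    calc ‖gc b w‖ * ‖gg b w ^ (-(k : ℤ))‖ * ‖dg b w‖ ≤
        (1 + (d + 1) * (C * R ^ d)) * 1 * (1 + (d + 1) * (d * C)) := by gcongr
      _ = _ := by ring

theorem lemmaA (d : ℕ) (hd : 0 < d) (s : ℂ) (hs : ‖s‖ < 1) : ∃ c : ℝ, 0 < c ∧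
    ∀ b : Fin (d + 1) → ℂ, (∀ w : ℂ, 1 ≤ ‖w‖ → gg b w ≠ 0) → (∀ w : ℂ, 1 ≤ ‖w‖ → dg b w ≠ 0) →
      InjOn (gg b) (sphere 0 1) → 0 < 1 - Nb b → Mk b 2 = s → c ≤ 1 - Nb b := by
  set C : ℝ := 2 ^ (d + 1) with hC
  have hC0 : 0 ≤ C := by positivity
  obtain ⟨C', hC'⟩ := Mk_bound d C hC0
  set ρ : ℝ := (d + 1) * C + 2 with hρ
  have hρ0 : 0 < ρ := by positivity
  set 𝒦 : Set ((Fin (d + 1) → ℂ) × (Fin (d + 1) → ℂ)) :=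
    {x | (∀ j, ‖x.1 j‖ ≤ C) ∧ (∀ j, ‖x.2 j‖ ≤ C') ∧ x.2 ⟨1, by omega⟩ = s ∧
      (∀ j : Fin (d + 1), (starRingEnd ℂ) (x.1 j) = Lc j (fun w => PP x.2 (gg x.1 w))) ∧
      ∀ m, ‖Vm x.1 m‖ ≤ (1 - Nb x.1) * ρ ^ m} with h𝒦
  have hcomp : IsCompact 𝒦 := by
    apply Metric.isCompact_of_isClosed_isBounded
    · have c1 : IsClosed (⋂ j, {x : (Fin (d + 1) → ℂ) × (Fin (d + 1) → ℂ) | ‖x.1 j‖ ≤ C}) :=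
        isClosed_iInter fun j => isClosed_le (by fun_prop) continuous_const
      have c2 : IsClosed (⋂ j, {x : (Fin (d + 1) → ℂ) × (Fin (d + 1) → ℂ) | ‖x.2 j‖ ≤ C'}) :=
        isClosed_iInter fun j => isClosed_le (by fun_prop) continuous_const
      have c3 : IsClosed {x : (Fin (d + 1) → ℂ) × (Fin (d + 1) → ℂ) | x.2 ⟨1, by omega⟩ = s} :=
        isClosed_eq (by fun_prop) continuous_const
      have c4 : IsClosed (⋂ j : Fin (d + 1), {x : (Fin (d + 1) → ℂ) × (Fin (d + 1) → ℂ) |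
          (starRingEnd ℂ) (x.1 j) = Lc j (fun w => PP x.2 (gg x.1 w))}) := by
        refine isClosed_iInter fun j => isClosed_eq ?_ (continuous_Lc j)
        exact Complex.continuous_conj.comp (by fun_prop)
      have c5 : IsClosed (⋂ m, {x : (Fin (d + 1) → ℂ) × (Fin (d + 1) → ℂ) |
          ‖Vm x.1 m‖ ≤ (1 - Nb x.1) * ρ ^ m}) := by
        refine isClosed_iInter fun m => isClosed_le ((continuous_Vm m).comp continuous_fst).norm ?_
        exact (continuous_const.sub (continuous_Nb.comp continuous_fst)).mul continuous_const
      refine (congrArg IsClosed ?_).mp (c1.inter (c2.inter (c3.inter (c4.inter c5))))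
      refine Set.ext fun x => ?_
      rw [h𝒦]
      simp only [mem_inter_iff, mem_iInter, mem_ofPred_eq]
    · rw [isBounded_iff_forall_norm_le]
      refine ⟨max C C', fun x hx => ?_⟩
      rw [Prod.norm_def]
      have h0 : 0 ≤ C' := (norm_nonneg _).trans (hx.2.1 0)
      exact max_le_max ((pi_norm_le_iff_of_nonneg hC0).2 hx.1) ((pi_norm_le_iff_of_nonneg h0).2 hx.2.1)
  have hpos : ∀ x ∈ 𝒦, 0 < 1 - Nb x.1 := by
    rintro ⟨b, p⟩ ⟨h1, h2, h3, h4, h5⟩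
    simp only at h1 h2 h3 h4 h5 ⊢
    have h0 : 0 ≤ 1 - Nb b := by
      have := h5 0
      rw [pow_zero, mul_one] at this
      exact (norm_nonneg _).trans this
    rcases h0.eq_or_lt with h | h
    · exfalso
      have hV : ∀ m, Vm b m = 0 := by
        intro m
        have := h5 m
        rw [← h, zero_mul] at this
        exact norm_le_zero_iff.1 this
      have hY := YY_zero_of_Vm b p ((coeff_YY_zero_iff b p).2 h4) hV
      exact exact_case b p hd hY (by linarith) (by rw [h3]; exact hs)
    · exact h
  have hmem : ∀ b : Fin (d + 1) → ℂ, (∀ w : ℂ, 1 ≤ ‖w‖ → gg b w ≠ 0) →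
      (∀ w : ℂ, 1 ≤ ‖w‖ → dg b w ≠ 0) →
      InjOn (gg b) (sphere 0 1) → 0 < 1 - Nb b → Mk b 2 = s →
      (b, fun j : Fin (d + 1) => Mk b ((j : ℕ) + 1)) ∈ 𝒦 := by
    intro b hg hdg hinj hN hM
    have hb := coeff_bound b hg
    refine ⟨hb, fun j => hC' b hg hb _, hM, ?_, ?_⟩
    · exact charA b _ hg fun j => rfl
    · intro m
      apply Vm_bound b hdg hinj hN
      intro w hw
      have := gg_sub_le b hb hw.ge
      have h4 := norm_sub_norm_le (gg b w) w
      linarith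
  rcases 𝒦.eq_empty_or_nonempty with he | hne
  · refine ⟨1, one_pos, fun b h1 h2 h3 h4 h5 => ?_⟩
    have := hmem b h1 h2 h3 h4 h5
    rw [he] at this
    exact this.elim
  · obtain ⟨x, hx, hmin⟩ := hcomp.exists_isMinOn hne
      (f := fun x => 1 - Nb x.1) (continuous_const.sub (continuous_Nb.comp continuous_fst)).continuousOn
    refine ⟨1 - Nb x.1, hpos x hx, fun b h1 h2 h3 h4 h5 => ?_⟩
    have hm := hmem b h1 h2 h3 h4 h5
    clear_value 𝒦
    exact isMinOn_iff.1 hmin (b, fun j : Fin (d + 1) => Mk b ((j : ℕ) + 1)) hm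

end PolyCurve

end

section

open Complex
open Filter Topology Metric Set Polynomial

namespace PolyCurve

variable {d : ℕ}

theorem Lc_const (hd : 0 < d) (c : ℂ) (j : Fin (d + 1)) :
    Lc j (fun _ => c) = if (j : ℕ) = 0 then c else 0 := by
  have h := Lc_poly (C c * X ^ d) (by omega : (j : ℕ) ≤ d)
  rw [← Lc_congr j (f := fun _ => c)] at h
  · rw [h, coeff_C_mul, coeff_X_pow]
    by_cases hj : (j : ℕ) = 0
    · simp [hj]
    · rw [if_neg (by omega), if_neg hj, mul_zero]
  · intro w hw
    have h0 := ne_zero_of_one_le hw.ge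
    simp only [eval_mul, eval_C, eval_pow, eval_X, inv_pow]
    field_simp

theorem Lc_gg (hd : 0 < d) (b : Fin (d + 1) → ℂ) (j : Fin (d + 1)) :
    Lc j (gg b) = if (j : ℕ) = 0 then b 0 else if (j : ℕ) = 1 then 1 else 0 := by
  have h := Lc_poly (X ^ (d - 1) + ∑ i : Fin (d + 1), C (b i) * X ^ (d + (i : ℕ)))
    (by omega : (j : ℕ) ≤ d)
  rw [← Lc_congr j (f := gg b)] at h
  · rw [h, coeff_add, coeff_X_pow, finsetSum_coeff]
    simp only [coeff_C_mul, coeff_X_pow]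
    by_cases hj : (j : ℕ) = 0
    · rw [if_pos hj, if_neg (by omega), zero_add, Finset.sum_eq_single 0]
      · simp [hj]
      · intro i _ hi
        have : (i : ℕ) ≠ 0 := fun h => hi (Fin.ext h)
        rw [if_neg (by omega), mul_zero]
      · simp
    · rw [if_neg hj, Finset.sum_eq_zero, add_zero]
      · by_cases h1 : (j : ℕ) = 1
        · rw [if_pos (by omega), if_pos h1]
        · rw [if_neg (by omega), if_neg h1]
      · intro i _
        rw [if_neg (by omega), mul_zero]
  · intro w hw
    have h0 := ne_zero_of_one_le hw.ge
    simp only [eval_add, eval_finsetSum, eval_mul, eval_C, eval_pow, eval_X, gg]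
    rw [mul_add, Finset.mul_sum]
    congr 1
    · obtain ⟨e, rfl⟩ : ∃ e, d = e + 1 := ⟨d - 1, by omega⟩
      rw [Nat.add_sub_cancel, pow_succ, inv_pow]
      field_simp
    · apply Finset.sum_congr rfl
      intro i _
      have h1 : w ^ d * (w⁻¹) ^ d = 1 := by rw [← mul_pow, mul_inv_cancel₀ h0, one_pow]
      rw [pow_add]
      linear_combination (-(b i * (w⁻¹) ^ (i : ℕ))) * h1

noncomputable def chi (d : ℕ) (t : ℕ → ℂ) (r : ℝ) (z : ℂ) : ℂ :=
  ∑ i : Fin (d + 1), (if 2 ≤ (i : ℕ) then (((i : ℕ) : ℂ) + 1) * t ((i : ℕ) + 1) else 0) *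
    (r : ℂ) ^ ((i : ℕ) - 2) * z ^ (i : ℕ)

noncomputable def pv (d : ℕ) (t : ℕ → ℂ) (r : ℝ) (p0 : ℂ) : Fin (d + 1) → ℂ := fun i =>
  if (i : ℕ) = 0 then p0 else (((i : ℕ) : ℂ) + 1) * t ((i : ℕ) + 1) * (r : ℂ) ^ ((i : ℕ) - 1)

theorem PP_pv (hd : 0 < d) (t : ℕ → ℂ) (r : ℝ) (p0 z : ℂ) :
    PP (pv d t r p0) z = p0 + 2 * t 2 * z + r * chi d t r z := by
  unfold PP chi
  have h1 : ∀ i : Fin (d + 1), pv d t r p0 i * z ^ (i : ℕ) =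
      (if i = 0 then p0 else 0) + (if i = ⟨1, by omega⟩ then 2 * t 2 * z else 0) +
      r * ((if 2 ≤ (i : ℕ) then (((i : ℕ) : ℂ) + 1) * t ((i : ℕ) + 1) else 0) *
    (r : ℂ) ^ ((i : ℕ) - 2) * z ^ (i : ℕ)) := by
    intro i
    unfold pv
    have e0 : i = 0 ↔ (i : ℕ) = 0 := by rw [Fin.ext_iff]; simp
    have e1 : i = ⟨1, by omega⟩ ↔ (i : ℕ) = 1 := by rw [Fin.ext_iff]
    simp only [e0, e1]
    obtain ⟨i, hi⟩ := i
    simp only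
    rcases i with _ | _ | i
    · simp
    · simp; norm_num
    · simp [pow_succ]
      ring
  rw [Finset.sum_congr rfl fun i _ => h1 i, Finset.sum_add_distrib, Finset.sum_add_distrib,
    Finset.sum_ite_eq', Finset.sum_ite_eq', Finset.mul_sum]
  simp

noncomputable def ee (d : ℕ) (s : ℂ) : Fin (d + 1) → ℂ := fun j =>
  if (j : ℕ) = 1 then (starRingEnd ℂ) s else 0

def DD (d : ℕ) (s : ℂ) (B η : ℝ) : Set (Fin (d + 1) → ℂ) :=
  Set.univ.pi fun j => closedBall (ee d s j) (if (j : ℕ) = 0 then B else η)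

theorem mem_DD {s : ℂ} {B η : ℝ} {b : Fin (d + 1) → ℂ} :
    b ∈ DD d s B η ↔ ∀ j, ‖b j - ee d s j‖ ≤ if (j : ℕ) = 0 then B else η := by
  simp [DD, dist_eq_norm]

theorem DD_compact (s : ℂ) (B η : ℝ) : IsCompact (DD d s B η) :=
  isCompact_univ_pi fun _ => isCompact_closedBall _ _

theorem DD_convex (s : ℂ) (B η : ℝ) : Convex ℝ (DD d s B η) :=
  convex_pi fun _ _ => convex_closedBall _ _

noncomputable def Sb (b : Fin (d + 1) → ℂ) : ℝ := ∑ j : Fin (d + 1), ((j : ℕ) : ℝ) * ‖b j‖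

theorem Sb_le {s : ℂ} {B η : ℝ} (hη : 0 ≤ η) {b : Fin (d + 1) → ℂ} (hb : b ∈ DD d s B η) :
    Sb b ≤ ‖s‖ + (d + 1) ^ 2 * η := by
  rw [mem_DD] at hb
  have h1 : ∀ j : Fin (d + 1), ((j : ℕ) : ℝ) * ‖b j‖ ≤
      (if (j : ℕ) = 1 then ‖s‖ else 0) + (d + 1) * η := by
    intro j
    have h3 : ((j : ℕ) : ℝ) ≤ d + 1 := by exact_mod_cast (by omega)
    by_cases h0 : (j : ℕ) = 0
    · rw [h0, if_neg (by omega)]; push_cast; simp; positivity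
    have h := hb j
    rw [if_neg h0] at h
    unfold ee at h
    by_cases h1 : (j : ℕ) = 1
    · rw [if_pos h1] at h ⊢
      have h4 := norm_sub_norm_le (b j) ((starRingEnd ℂ) s)
      rw [Complex.norm_conj] at h4
      rw [h1]
      push_cast
      nlinarith [(Nat.cast_nonneg d : (0 : ℝ) ≤ d)]
    · rw [if_neg h1] at h ⊢
      rw [sub_zero] at h
      rw [zero_add]
      gcongr
  refine (Finset.sum_le_sum fun j _ => h1 j).trans ?_
  rw [Finset.sum_add_distrib]
  have : ∑ j : Fin (d + 1), (if (j : ℕ) = 1 then ‖s‖ else 0) ≤ ‖s‖ := by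
    rcases Nat.eq_zero_or_pos d with h0 | h0
    · subst h0; simp
    · have : ∀ j : Fin (d + 1), (if (j : ℕ) = 1 then ‖s‖ else 0) =
          if j = ⟨1, by omega⟩ then ‖s‖ else 0 := by
        intro j
        simp only [Fin.ext_iff]
      rw [Finset.sum_congr rfl fun j _ => this j, Finset.sum_ite_eq']
      simp
  simp
  nlinarith

theorem Nb_le_Sb {b : Fin (d + 1) → ℂ} (h : Sb b ≤ 1) : Nb b ≤ Sb b := by
  unfold Nb
  apply Finset.sum_le_sum
  intro j _
  rcases Nat.eq_zero_or_pos (j : ℕ) with h0 | h0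
  · simp [h0]
  have h1 : ‖b j‖ ≤ 1 := by
    have h2 : ((j : ℕ) : ℝ) * ‖b j‖ ≤ Sb b :=
      Finset.single_le_sum (f := fun j : Fin (d + 1) => ((j : ℕ) : ℝ) * ‖b j‖)
        (fun i _ => by positivity) (Finset.mem_univ j)
    have h3 : (1 : ℝ) ≤ ((j : ℕ) : ℝ) := by exact_mod_cast h0
    nlinarith [norm_nonneg (b j)]
  have := norm_nonneg (b j)
  have : ‖b j‖ ^ 2 ≤ ‖b j‖ := by nlinarith
  gcongr

theorem Nb_nonneg (b : Fin (d + 1) → ℂ) : 0 ≤ Nb b := by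
  unfold Nb; positivity

noncomputable def kb (b : Fin (d + 1) → ℂ) : ℝ := √(1 - Nb b)

theorem kb_le_one (b : Fin (d + 1) → ℂ) : kb b ≤ 1 := by
  unfold kb
  rw [Real.sqrt_le_left (by norm_num), one_pow]
  linarith [Nb_nonneg b]

theorem contDiff_Nb : ContDiff ℝ 1 (Nb : (Fin (d + 1) → ℂ) → ℝ) := by
  unfold Nb
  apply ContDiff.sum
  intro j _
  exact contDiff_const.mul ((contDiff_apply ℝ ℂ j).norm_sq ℝ)

theorem contDiff_chi (t : ℕ → ℂ) : ContDiff ℝ 1 (fun x : ℝ × ℝ × ℂ =>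
    ((x.2.1 : ℝ) : ℂ) * chi d t (x.1 * x.2.1) x.2.2) := by
  unfold chi
  have h1 : ContDiff ℝ 1 (fun x : ℝ => (x : ℂ)) := Complex.ofRealCLM.contDiff
  refine (h1.comp (by fun_prop)).mul ?_
  apply ContDiff.sum
  intro j _
  have h2 : ContDiff ℝ 1 (fun x : ℝ × ℝ × ℂ => ((x.1 * x.2.1 : ℝ) : ℂ)) := h1.comp (by fun_prop)
  exact (contDiff_const.mul (h2.pow _)).mul ((by fun_prop : ContDiff ℝ 1 (fun x : ℝ × ℝ × ℂ => x.2.2)).pow _)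

end PolyCurve

end

section

open Complex
open Filter Topology Metric Set

namespace PolyCurve

variable {d : ℕ}

/-- `1/k`-scaled nonlinear term -/
noncomputable def Th (t : ℕ → ℂ) (ε : ℝ) (b : Fin (d + 1) → ℂ) (w : ℂ) : ℂ :=
  (((kb b)⁻¹ : ℝ) : ℂ) * chi d t (ε * (kb b)⁻¹) (gg b w)

theorem kb_pos_of_DD {s : ℂ} {B η : ℝ} (hη : 0 ≤ η) (h1 : ‖s‖ + (d + 1) ^ 2 * η < 1)
    {b : Fin (d + 1) → ℂ} (hb : b ∈ DD d s B η) : Nb b < 1 ∧ 0 < kb b := by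
  have h2 := Sb_le hη hb
  have h3 := Nb_le_Sb (b := b) (by linarith)
  have h4 : Nb b < 1 := by linarith
  exact ⟨h4, Real.sqrt_pos.2 (by linarith)⟩

theorem contDiffOn_kb {s : ℂ} {B η : ℝ} (hη : 0 ≤ η) (h1 : ‖s‖ + (d + 1) ^ 2 * η < 1) :
    ContDiffOn ℝ 1 (kb : (Fin (d + 1) → ℂ) → ℝ) (DD d s B η) := by
  unfold kb
  apply ContDiffOn.sqrt
  · exact (contDiff_const.sub contDiff_Nb).contDiffOn
  · intro b hb
    have := (kb_pos_of_DD hη h1 hb).1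
    exact (by linarith : 0 < 1 - Nb b).ne'

theorem gg_lip (b b' : Fin (d + 1) → ℂ) {w : ℂ} (hw : ‖w‖ = 1) :
    ‖gg b w - gg b' w‖ ≤ (d + 1) * ‖b - b'‖ := by
  unfold gg
  rw [add_sub_add_left_eq_sub, ← Finset.sum_sub_distrib]
  refine (norm_sum_le _ _).trans ?_
  have : ∀ j ∈ (Finset.univ : Finset (Fin (d + 1))),
      ‖b j * (w⁻¹) ^ (j : ℕ) - b' j * (w⁻¹) ^ (j : ℕ)‖ ≤ ‖b - b'‖ := by
    intro j _
    rw [← sub_mul, norm_mul, norm_pow, norm_inv, hw, inv_one, one_pow, mul_one]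
    exact norm_le_pi_norm (b - b') j
  refine (Finset.sum_le_sum this).trans ?_
  simp

theorem theta_bounds (d : ℕ) (t : ℕ → ℂ) {s : ℂ} {B η : ℝ} (hη : 0 ≤ η)
    (h1 : ‖s‖ + (d + 1) ^ 2 * η < 1) : ∃ L : ℝ, 0 ≤ L ∧
    (∀ ε : ℝ, 0 ≤ ε → ε ≤ 1 → ∀ b ∈ DD d s B η, ∀ w : ℂ, ‖w‖ = 1 → ‖Th t ε b w‖ ≤ L) ∧
    (∀ ε : ℝ, 0 ≤ ε → ε ≤ 1 → ∀ b ∈ DD d s B η, ∀ b' ∈ DD d s B η, ∀ w : ℂ, ‖w‖ = 1 →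
      ‖Th t ε b w - Th t ε b' w‖ ≤ L * ‖b - b'‖) ∧
    (∀ b ∈ DD d s B η, ∀ b' ∈ DD d s B η, |kb b - kb b'| ≤ L * ‖b - b'‖) := by
  have hk := contDiffOn_kb (B := B) hη h1
  have hki : ContDiffOn ℝ 1 (fun b : Fin (d + 1) → ℂ => (kb b)⁻¹) (DD d s B η) :=
    hk.inv fun b hb => (kb_pos_of_DD hη h1 hb).2.ne'
  obtain ⟨K1, hK1⟩ := hk.exists_lipschitzOnWith one_ne_zero (DD_convex s B η) (DD_compact s B η)
  obtain ⟨K2, hK2⟩ := hki.exists_lipschitzOnWith one_ne_zero (DD_convex s B η) (DD_compact s B η)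
  obtain ⟨M1, hM1⟩ := (DD_compact (d := d) s B η).exists_bound_of_continuousOn hki.continuousOn
  obtain ⟨M2, hM2⟩ := (DD_compact (d := d) s B η).exists_bound_of_continuousOn (f := fun b => b)
    continuousOn_id
  set S : Set (ℝ × ℝ × ℂ) := Icc 0 1 ×ˢ closedBall 0 M1 ×ˢ closedBall 0 (1 + (d + 1) * M2) with hS
  have hSc : IsCompact S := isCompact_Icc.prod ((isCompact_closedBall _ _).prod (isCompact_closedBall _ _))
  have hSv : Convex ℝ S := (convex_Icc _ _).prod ((convex_closedBall _ _).prod (convex_closedBall _ _))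
  obtain ⟨K3, hK3⟩ := (contDiff_chi (d := d) t).contDiffOn.exists_lipschitzOnWith one_ne_zero hSv hSc
  obtain ⟨M3, hM3⟩ := hSc.exists_bound_of_continuousOn (contDiff_chi (d := d) t).continuous.continuousOn
  have hmem : ∀ ε : ℝ, 0 ≤ ε → ε ≤ 1 → ∀ b ∈ DD d s B η, ∀ w : ℂ, ‖w‖ = 1 →
      ((ε, (kb b)⁻¹, gg b w) : ℝ × ℝ × ℂ) ∈ S := by
    intro ε h0 h1 b hb w hw
    refine ⟨⟨h0, h1⟩, ?_, ?_⟩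
    · simpa using hM1 b hb
    · rw [mem_closedBall_zero_iff]
      have h2 := gg_lip b 0 hw
      have h3 := hM2 b hb
      have h4 : gg (0 : Fin (d + 1) → ℂ) w = w := by simp [gg]
      rw [h4, sub_zero] at h2
      have h5 := norm_sub_norm_le (gg b w) w
      have h6 : ((d : ℝ) + 1) * ‖b‖ ≤ (d + 1) * M2 := by gcongr
      simp only
      linarith
  set L : ℝ := max (max K1 M3) (K3 * (K2 + (d + 1))) with hL
  have hLM : M3 ≤ L := (le_max_right _ _).trans (le_max_left _ _)
  have hLK : (K1 : ℝ) ≤ L := (le_max_left _ _).trans (le_max_left _ _)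
  have hL3 : K3 * (K2 + (d + 1)) ≤ L := le_max_right _ _
  refine ⟨L, K1.2.trans hLK, ?_, ?_, ?_⟩
  · intro ε h0 h1 b hb w hw
    exact (hM3 _ (hmem ε h0 h1 b hb w hw)).trans hLM
  · intro ε h0 h1 b hb b' hb' w hw
    have h2 := lipschitzOnWith_iff_norm_sub_le.1 hK3 (hmem ε h0 h1 b hb w hw) (hmem ε h0 h1 b' hb' w hw)
    have h3 := lipschitzOnWith_iff_norm_sub_le.1 hK2 hb hb'
    have h4 := gg_lip b b' hw
    refine le_trans h2 ?_
    have h5 : ‖((ε, (kb b)⁻¹, gg b w) : ℝ × ℝ × ℂ) - (ε, (kb b')⁻¹, gg b' w)‖ ≤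
        (K2 + (d + 1)) * ‖b - b'‖ := by
      simp only [Prod.mk_sub_mk, sub_self, Prod.norm_mk, norm_zero]
      have h6 : 0 ≤ (K2 : ℝ) * ‖b - b'‖ := by positivity
      have h7 : 0 ≤ ((d : ℝ) + 1) * ‖b - b'‖ := by positivity
      rw [add_mul]
      refine max_le (by positivity) (max_le ?_ ?_)
      · linarith
      · linarith
    calc _ ≤ (K3 : ℝ) * ((K2 + (d + 1)) * ‖b - b'‖) := by gcongr
      _ = (K3 * (K2 + (d + 1))) * ‖b - b'‖ := by ring
      _ ≤ _ := by gcongr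
  · intro b hb b' hb'
    have h3 := lipschitzOnWith_iff_norm_sub_le.1 hK1 hb hb'
    rw [Real.norm_eq_abs] at h3
    exact h3.trans (by gcongr)

end PolyCurve

end

section

open Complex
open Filter Topology Metric Set

namespace PolyCurve

variable {d : ℕ}

theorem continuousOn_Th (t : ℕ → ℂ) (ε : ℝ) (b : Fin (d + 1) → ℂ) :
    ContinuousOn (Th t ε b) (sphere 0 1) := by
  unfold Th
  refine continuousOn_const.mul ?_
  have : Continuous (chi d t (ε * (kb b)⁻¹)) := by
    unfold chi
    fun_prop
  exact this.comp_continuousOn (continuousOn_gg_sphere b)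

theorem kb_nonneg (b : Fin (d + 1) → ℂ) : 0 ≤ kb b := Real.sqrt_nonneg _

theorem kb_congr {b b' : Fin (d + 1) → ℂ} (h : ∀ j : Fin (d + 1), (j : ℕ) ≠ 0 → b j = b' j) :
    kb b = kb b' := by
  unfold kb Nb
  congr 2
  apply Finset.sum_congr rfl
  intro j _
  by_cases hj : (j : ℕ) = 0
  · simp [hj]
  · rw [h j hj]

noncomputable def Fh (t : ℕ → ℂ) (ε : ℝ) (s : ℂ) (b : Fin (d + 1) → ℂ) : Fin (d + 1) → ℂ :=
  fun j => if (j : ℕ) = 0 then 0 else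
    (starRingEnd ℂ) ((if (j : ℕ) = 1 then s else 0) + ε * Lc j (Th t ε b))

noncomputable def FF (t : ℕ → ℂ) (ε : ℝ) (s σ : ℂ) (b : Fin (d + 1) → ℂ) : Fin (d + 1) → ℂ :=
  fun j => if (j : ℕ) = 0 then
    (starRingEnd ℂ) (σ * kb (Fh t ε s b) + s * b 0 + ε * Lc 0 (Th t ε b)) else Fh t ε s b j

def Eqn (t : ℕ → ℂ) (ε : ℝ) (s σ : ℂ) (b : Fin (d + 1) → ℂ) : Prop :=
  ∀ j : Fin (d + 1), (starRingEnd ℂ) (b j) =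
    (if (j : ℕ) = 0 then σ * kb b + s * b 0 else if (j : ℕ) = 1 then s else 0) +
      ε * Lc j (Th t ε b)

theorem Eqn_iff (t : ℕ → ℂ) (ε : ℝ) (s σ : ℂ) (b : Fin (d + 1) → ℂ) :
    Eqn t ε s σ b ↔ FF t ε s σ b = b := by
  constructor
  · intro h
    have h1 : ∀ j : Fin (d + 1), (j : ℕ) ≠ 0 → Fh t ε s b j = b j := by
      intro j hj
      have := h j
      rw [if_neg hj] at this
      unfold Fh
      rw [if_neg hj, ← this, Complex.conj_conj]
    funext j
    unfold FF
    by_cases hj : (j : ℕ) = 0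
    · have := h j
      rw [if_pos hj] at this
      rw [if_pos hj, kb_congr h1, ← Complex.conj_conj (b j), this, hj]
    · rw [if_neg hj, h1 j hj]
  · intro h j
    have h1 : ∀ j : Fin (d + 1), (j : ℕ) ≠ 0 → Fh t ε s b j = b j := by
      intro j hj
      conv_rhs => rw [← h]
      unfold FF
      rw [if_neg hj]
    by_cases hj : (j : ℕ) = 0
    · conv_lhs => rw [← h]
      unfold FF
      rw [if_pos hj, if_pos hj, kb_congr h1, Complex.conj_conj, hj]
    · rw [if_neg hj, ← h1 j hj]
      unfold Fh
      rw [if_neg hj, Complex.conj_conj]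

theorem contraction (d : ℕ) (t : ℕ → ℂ) {s : ℂ} {B η : ℝ} (hη : 0 < η)
    (h1 : ‖s‖ + (d + 1) ^ 2 * η < 1) (hB : 2 ≤ B * (1 - ‖s‖)) : ∃ ε₀ : ℝ, 0 < ε₀ ∧ ε₀ ≤ 1 ∧
    ∀ ε : ℝ, 0 < ε → ε ≤ ε₀ → ∀ σ : ℂ, ‖σ‖ ≤ 1 →
      ∃ b : Fin (d + 1) → ℂ, b ∈ DD d s B η ∧ Eqn t ε s σ b ∧
        ∀ b' ∈ DD d s B η, Eqn t ε s σ b' → b' = b := by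
  obtain ⟨L, hL0, hL1, hL2, hL3⟩ := theta_bounds d t (B := B) hη.le h1
  set q := ‖s‖ with hq
  have hq0 : 0 ≤ q := norm_nonneg s
  have hq1 : q < 1 := by nlinarith [sq_nonneg ((d : ℝ) + 1)]
  have hB0 : 0 < B := by
    by_contra h
    push Not at h
    nlinarith
  obtain ⟨ε₀, he0, he1, he2, he3⟩ : ∃ ε₀ : ℝ, 0 < ε₀ ∧ ε₀ ≤ 1 ∧ ε₀ * L ≤ min η 1 ∧
      ε₀ * (L + L * L) ≤ (1 - q) / 2 := by
    have hm : 0 < min η 1 := lt_min hη one_pos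
    refine ⟨min 1 (min (min η 1 / (L + 1)) ((1 - q) / 2 / (L + L * L + 1))), ?_, min_le_left _ _, ?_, ?_⟩
    · have : 0 < 1 - q := by linarith
      positivity
    · calc _ ≤ min η 1 / (L + 1) * (L + 1) := by
            gcongr
            · exact (min_le_right _ _).trans (min_le_left _ _)
            · linarith
        _ = _ := by field_simp
    · calc _ ≤ (1 - q) / 2 / (L + L * L + 1) * (L + L * L + 1) := by
            refine mul_le_mul ((min_le_right _ _).trans (min_le_right _ _)) (by linarith)
              (by positivity) ?_
            have : 0 < 1 - q := by linarith
            positivity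
        _ = _ := by
            have : L + L * L + 1 ≠ 0 := by positivity
            field_simp
  refine ⟨ε₀, he0, he1, fun ε hε hε' σ hσ => ?_⟩
  have hεL : ε * L ≤ min η 1 := le_trans (by gcongr) he2
  have hεL2 : ε * (L + L * L) ≤ (1 - q) / 2 := le_trans (by gcongr) he3
  have hε1 : ε ≤ 1 := hε'.trans he1
  have hn : ‖(ε : ℂ)‖ = ε := by simp [abs_of_pos hε]
  -- bounds on the nonlinear term
  have hN : ∀ b ∈ DD d s B η, ∀ j : ℕ, ‖(ε : ℂ) * Lc j (Th t ε b)‖ ≤ ε * L := by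
    intro b hb j
    rw [norm_mul, hn]
    gcongr
    exact Lc_norm_le j (hL1 ε hε.le hε1 b hb)
  have hN2 : ∀ b ∈ DD d s B η, ∀ b' ∈ DD d s B η, ∀ j : ℕ,
      ‖(ε : ℂ) * Lc j (Th t ε b) - ε * Lc j (Th t ε b')‖ ≤ ε * L * ‖b - b'‖ := by
    intro b hb b' hb' j
    rw [← mul_sub, norm_mul, hn, ← Lc_sub j (continuousOn_Th t ε b) (continuousOn_Th t ε b'), mul_assoc]
    gcongr
    exact Lc_norm_le j (hL2 ε hε.le hε1 b hb b' hb')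
  have hFh : ∀ b ∈ DD d s B η, Fh t ε s b ∈ DD d s B η := by
    intro b hb
    rw [mem_DD]
    intro j
    unfold Fh ee
    by_cases hj : (j : ℕ) = 0
    · rw [if_pos hj, if_pos hj, if_neg (by omega)]
      simpa using hB0.le
    · rw [if_neg hj, if_neg hj]
      have h2 : (starRingEnd ℂ) ((if (j : ℕ) = 1 then s else 0) + ε * Lc j (Th t ε b)) -
          (if (j : ℕ) = 1 then (starRingEnd ℂ) s else 0) = (starRingEnd ℂ) (ε * Lc j (Th t ε b)) := by
        split_ifs <;> simp
      rw [h2, Complex.norm_conj]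
      exact (hN b hb j).trans (hεL.trans (min_le_left _ _))
  have hFh2 : ∀ b ∈ DD d s B η, ∀ b' ∈ DD d s B η,
      ‖Fh t ε s b - Fh t ε s b'‖ ≤ ε * L * ‖b - b'‖ := by
    intro b hb b' hb'
    rw [pi_norm_le_iff_of_nonneg (by positivity)]
    intro j
    rw [Pi.sub_apply]
    unfold Fh
    by_cases hj : (j : ℕ) = 0
    · rw [if_pos hj, if_pos hj]
      simp
      positivity
    · rw [if_neg hj, if_neg hj, ← map_sub, Complex.norm_conj, add_sub_add_left_eq_sub]
      exact hN2 b hb b' hb' j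
  have hmaps : MapsTo (FF t ε s σ) (DD d s B η) (DD d s B η) := by
    intro b hb
    rw [mem_DD]
    intro j
    by_cases hj : (j : ℕ) = 0
    · unfold FF ee
      rw [if_pos hj, if_pos hj, if_neg (by omega), sub_zero, Complex.norm_conj]
      have h2 := hN b hb 0
      have h3 : ‖b 0‖ ≤ B := by
        have := mem_DD.1 hb 0
        simpa [ee] using this
      have h4 : ‖σ * (kb (Fh t ε s b) : ℂ)‖ ≤ 1 := by
        rw [norm_mul, Complex.norm_real, Real.norm_eq_abs, abs_of_nonneg (kb_nonneg _)]
        exact mul_le_one₀ hσ (kb_nonneg _) (kb_le_one _)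
      have h5 : ‖s * b 0‖ ≤ q * B := by
        rw [norm_mul]
        gcongr
      have h6 : ε * L ≤ 1 := hεL.trans (min_le_right _ _)
      refine (norm_add_le _ _).trans ?_
      have := norm_add_le (σ * (kb (Fh t ε s b) : ℂ)) (s * b 0)
      linarith
    · have := mem_DD.1 (hFh b hb) j
      unfold FF
      rw [if_neg hj]
      exact this
  have hq2 : 0 ≤ (1 + q) / 2 := by linarith
  have hlip : ∀ b ∈ DD d s B η, ∀ b' ∈ DD d s B η,
      ‖FF t ε s σ b - FF t ε s σ b'‖ ≤ (1 + q) / 2 * ‖b - b'‖ := by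
    intro b hb b' hb'
    rw [pi_norm_le_iff_of_nonneg (by positivity)]
    intro j
    rw [Pi.sub_apply]
    have hnn := norm_nonneg (b - b')
    by_cases hj : (j : ℕ) = 0
    · unfold FF
      rw [if_pos hj, if_pos hj, ← map_sub, Complex.norm_conj]
      have h2 := hN2 b hb b' hb' 0
      have h3 := hL3 _ (hFh b hb) _ (hFh b' hb')
      have h4 := hFh2 b hb b' hb'
      have h5 : ‖σ * ((kb (Fh t ε s b) : ℂ) - kb (Fh t ε s b'))‖ ≤ L * (ε * L * ‖b - b'‖) := by
        rw [norm_mul, ← Complex.ofReal_sub, Complex.norm_real, Real.norm_eq_abs]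
        calc _ ≤ 1 * (L * ‖Fh t ε s b - Fh t ε s b'‖) := by gcongr
          _ ≤ _ := by rw [one_mul]; gcongr
      have h6 : ‖s * (b 0 - b' 0)‖ ≤ q * ‖b - b'‖ := by
        rw [norm_mul]
        gcongr
        exact norm_le_pi_norm (b - b') 0
      have h7 : σ * (kb (Fh t ε s b) : ℂ) + s * b 0 + ε * Lc 0 (Th t ε b) -
          (σ * (kb (Fh t ε s b') : ℂ) + s * b' 0 + ε * Lc 0 (Th t ε b')) =
          σ * ((kb (Fh t ε s b) : ℂ) - kb (Fh t ε s b')) + s * (b 0 - b' 0) +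
          (ε * Lc 0 (Th t ε b) - ε * Lc 0 (Th t ε b')) := by ring
      rw [h7]
      refine (norm_add₃_le).trans ?_
      nlinarith
    · unfold FF
      rw [if_neg hj, if_neg hj]
      refine (norm_le_pi_norm (Fh t ε s b - Fh t ε s b') j).trans ((hFh2 b hb b' hb').trans ?_)
      gcongr
      nlinarith [mul_nonneg hε.le (mul_nonneg hL0 hL0)]
  have hK : ContractingWith (Real.toNNReal ((1 + q) / 2)) (hmaps.restrict (FF t ε s σ) _ _) := by
    refine ⟨?_, LipschitzWith.of_dist_le_mul fun x y => ?_⟩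
    · rw [Real.toNNReal_lt_one]
      linarith
    · rw [Real.coe_toNNReal _ hq2, Subtype.dist_eq, Subtype.dist_eq, dist_eq_norm, dist_eq_norm]
      exact hlip _ x.2 _ y.2
  have hx : ee d s ∈ DD d s B η := by
    rw [mem_DD]
    intro j
    rw [sub_self, norm_zero]
    split_ifs <;> positivity
  obtain ⟨b, hb, hfix, -⟩ := ContractingWith.exists_fixedPoint' (DD_compact s B η).isComplete hmaps hK hx
    (edist_ne_top _ _)
  refine ⟨b, hb, (Eqn_iff _ _ _ _ _).2 hfix, fun b' hb' he => ?_⟩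
  rw [Eqn_iff] at he
  have h2 := hlip b' hb' b hb
  rw [he, hfix] at h2
  have h3 : ‖b' - b‖ ≤ 0 := by nlinarith [norm_nonneg (b' - b)]
  exact sub_eq_zero.1 (norm_le_zero_iff.1 h3)

end PolyCurve

end

section

open Complex
open Filter Topology Metric Set

namespace PolyCurve

variable {d : ℕ}

theorem dg_ne_zero_of_Sb {b : Fin (d + 1) → ℂ} (h : Sb b < 1) {w : ℂ} (hw : 1 ≤ ‖w‖) :
    dg b w ≠ 0 := by
  intro h0
  rw [← KK_self] at h0
  have h1 := KK_bound b hw hw h0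
  have h2 : Sb b < 1 := h
  unfold Sb at h2
  nlinarith

theorem injOn_of_Sb {b : Fin (d + 1) → ℂ} (h : Sb b < 1) : InjOn (gg b) (sphere 0 1) := by
  intro w hw u hu he
  have hw' : ‖w‖ = 1 := by simpa using hw
  have hu' : ‖u‖ = 1 := by simpa using hu
  by_contra hne
  have h1 := KK_mul b (ne_zero_of_one_le hw'.ge) (ne_zero_of_one_le hu'.ge)
  rw [he, sub_self] at h1
  have h2 : KK b w u = 0 := (mul_eq_zero.1 h1.symm).resolve_left (sub_ne_zero.2 hne)
  have h3 := KK_bound b hw'.ge hu'.ge h2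
  rw [hw', hu'] at h3
  have h2 : Sb b < 1 := h
  unfold Sb at h2
  linarith

theorem main_lower (s w : ℂ) (hs : ‖s‖ < 1) (hw : 1 ≤ ‖w‖) :
    1 - ‖s‖ ^ 2 ≤ ‖(starRingEnd ℂ) (w + (starRingEnd ℂ) s * w⁻¹) - s * (w + (starRingEnd ℂ) s * w⁻¹)‖ := by
  have h0 := ne_zero_of_one_le hw
  set ρ := ‖w‖ with hρ
  set q := ‖s‖ with hq
  have hρ0 : (ρ : ℂ) ≠ 0 := by
    rw [Complex.ofReal_ne_zero]; linarith
  have hρp : 0 < ρ := by linarith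
  have hq0 : 0 ≤ q := norm_nonneg s
  have e1 : w⁻¹ = (starRingEnd ℂ) w * ((ρ : ℂ) ^ 2)⁻¹ := by
    rw [Complex.inv_def, Complex.normSq_eq_norm_sq]; push_cast; rfl
  have e2 : s * (starRingEnd ℂ) s = (q : ℂ) ^ 2 := Complex.mul_conj' s
  have e3 : (starRingEnd ℂ) (w + (starRingEnd ℂ) s * w⁻¹) - s * (w + (starRingEnd ℂ) s * w⁻¹) =
      (starRingEnd ℂ) w * ((1 - q ^ 2 / ρ ^ 2 : ℝ) : ℂ) - s * w * ((1 - 1 / ρ ^ 2 : ℝ) : ℂ) := by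
    rw [e1]
    simp only [map_add, map_mul, Complex.conj_conj, map_inv₀, map_pow, Complex.conj_ofReal]
    push_cast
    rw [← e2]
    field_simp
    ring
  rw [e3]
  refine le_trans ?_ (norm_sub_norm_le _ _)
  rw [norm_mul, norm_mul, norm_mul, Complex.norm_conj, Complex.norm_real, Complex.norm_real,
    Real.norm_eq_abs, Real.norm_eq_abs, ← hρ, ← hq]
  have hρ2 : 1 ≤ ρ ^ 2 := one_le_pow₀ hw
  have a1 : 0 ≤ 1 - 1 / ρ ^ 2 := by
    rw [sub_nonneg, div_le_one (by positivity)]; exact hρ2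
  have a2 : 0 ≤ 1 - q ^ 2 / ρ ^ 2 := by
    rw [sub_nonneg, div_le_one (by positivity)]; nlinarith
  rw [abs_of_nonneg a1, abs_of_nonneg a2]
  have : ρ * (1 - q ^ 2 / ρ ^ 2) - q * ρ * (1 - 1 / ρ ^ 2) - (1 - q ^ 2) =
      (1 - q) * ((ρ - 1) * (ρ - q) / ρ) := by
    field_simp
    ring
  have h3 : 0 ≤ (1 - q) * ((ρ - 1) * (ρ - q) / ρ) := by
    apply mul_nonneg (by linarith)
    apply div_nonneg _ hρp.le
    apply mul_nonneg <;> linarith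
  linarith

theorem gg_ne_zero_of {s : ℂ} (hs : ‖s‖ < 1) {B η : ℝ} (hη : 0 ≤ η) (hd : 0 < d)
    {b : Fin (d + 1) → ℂ} (hb : b ∈ DD d s B η)
    (hT : ‖(starRingEnd ℂ) (b 0) - s * b 0‖ < 1 - ‖s‖ ^ 2 - 2 * (d + 1) * η) {w : ℂ} (hw : 1 ≤ ‖w‖) :
    gg b w ≠ 0 := by
  intro h0
  rw [mem_DD] at hb
  set E : ℂ := ∑ j : Fin (d + 1), (if (j : ℕ) = 0 then 0 else b j - ee d s j) * (w⁻¹) ^ (j : ℕ) with hE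
  have h1 : ‖E‖ ≤ (d + 1) * η := by
    refine (norm_sum_le _ _).trans ?_
    have : ∀ j ∈ (Finset.univ : Finset (Fin (d + 1))),
        ‖(if (j : ℕ) = 0 then 0 else b j - ee d s j) * (w⁻¹) ^ (j : ℕ)‖ ≤ η := by
      intro j _
      by_cases hj : (j : ℕ) = 0
      · rw [if_pos hj]; simpa using hη
      · have h2 := hb j
        rw [if_neg hj] at h2 ⊢
        rw [norm_mul, norm_pow, norm_inv]
        have h3 : (‖w‖⁻¹) ^ (j : ℕ) ≤ 1 := pow_le_one₀ (by positivity) (inv_le_one_of_one_le₀ hw)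
        calc _ ≤ η * 1 := by gcongr
          _ = η := mul_one _
    refine (Finset.sum_le_sum this).trans ?_
    simp
  have h2 : gg b w = (w + (starRingEnd ℂ) s * w⁻¹) + b 0 + E := by
    have h3 : ∀ j : Fin (d + 1), b j * (w⁻¹) ^ (j : ℕ) =
        (if j = 0 then b 0 else 0) + (if j = ⟨1, by omega⟩ then (starRingEnd ℂ) s * w⁻¹ else 0) +
        (if (j : ℕ) = 0 then 0 else b j - ee d s j) * (w⁻¹) ^ (j : ℕ) := by
      intro j
      have e0 : j = 0 ↔ (j : ℕ) = 0 := by rw [Fin.ext_iff]; simp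
      have e1 : j = ⟨1, by omega⟩ ↔ (j : ℕ) = 1 := by rw [Fin.ext_iff]
      by_cases hj : (j : ℕ) = 0
      · have : j = 0 := e0.2 hj
        subst this
        simp [e1]
      · by_cases hj1 : (j : ℕ) = 1
        · simp only [e0, e1, hj1, ee]
          simp
          ring
        · simp only [e0, e1, hj, hj1, ee]
          simp
    unfold gg
    rw [Finset.sum_congr rfl fun j _ => h3 j, Finset.sum_add_distrib, Finset.sum_add_distrib,
      Finset.sum_ite_eq', Finset.sum_ite_eq']
    simp only [Finset.mem_univ, if_true]
    ring
  rw [h0] at h2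
  have h3 : b 0 = -(w + (starRingEnd ℂ) s * w⁻¹) - E := by linear_combination -h2
  have h4 := main_lower s w hs hw
  have h5 : (starRingEnd ℂ) (w + (starRingEnd ℂ) s * w⁻¹) - s * (w + (starRingEnd ℂ) s * w⁻¹) =
      -((starRingEnd ℂ) (b 0) - s * b 0) + (-(starRingEnd ℂ) E + s * E) := by
    rw [h3, map_sub, map_neg]
    ring
  rw [h5] at h4
  have h6 := norm_add_le (-((starRingEnd ℂ) (b 0) - s * b 0)) (-(starRingEnd ℂ) E + s * E)
  have h7 := norm_add_le (-(starRingEnd ℂ) E) (s * E)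
  rw [norm_neg] at h6 h7
  rw [Complex.norm_conj, norm_mul] at h7
  have h8 : ‖s‖ * ‖E‖ ≤ 1 * ‖E‖ := by gcongr
  linarith

theorem Lc_pv (hd : 0 < d) (t : ℕ → ℂ) {r ε : ℝ} {σ : ℂ} {b : Fin (d + 1) → ℂ}
    (hk : 0 < kb b) (hr : r = ε * (kb b)⁻¹) (j : Fin (d + 1)) :
    Lc j (fun w => PP (pv d t r (σ * kb b)) (gg b w)) =
    (if (j : ℕ) = 0 then σ * kb b + 2 * t 2 * b 0 else if (j : ℕ) = 1 then 2 * t 2 else 0) +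
      ε * Lc j (Th t ε b) := by
  have h1 : (fun w => PP (pv d t r (σ * kb b)) (gg b w)) = fun w =>
      (σ * kb b + 2 * t 2 * gg b w) + ε * Th t ε b w := by
    funext w
    rw [PP_pv hd, Th, ← hr]
    rw [hr]
    push_cast
    ring
  rw [h1]
  have c1 : ContinuousOn (fun w => 2 * t 2 * gg b w) (sphere 0 1) :=
    continuousOn_const.mul (continuousOn_gg_sphere b)
  have c2 : ContinuousOn (fun w => (ε : ℂ) * Th t ε b w) (sphere 0 1) :=
    continuousOn_const.mul (continuousOn_Th t ε b)
  rw [Lc_add j (f := fun w => σ * kb b + 2 * t 2 * gg b w) (continuousOn_const.add c1) c2,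
    Lc_add j (f := fun _ => σ * (kb b : ℂ)) continuousOn_const c1, Lc_const hd,
    Lc_const_mul j (2 * t 2) (gg b), Lc_const_mul j (ε : ℂ) (Th t ε b),
    Lc_gg hd]
  congr 1
  split_ifs <;> ring

/-- admissibility in normalized coordinates -/
structure Adm (t : ℕ → ℂ) (t₀ : ℝ) (t₁ : ℂ) (r : ℝ) (b : Fin (d + 1) → ℂ) : Prop where
  rpos : 0 < r
  inj : InjOn (gg b) (sphere 0 1)
  dg0 : ∀ w : ℂ, 1 ≤ ‖w‖ → dg b w ≠ 0
  gg0 : ∀ w : ℂ, 1 ≤ ‖w‖ → gg b w ≠ 0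
  area : r ^ 2 * (1 - Nb b) = t₀
  mom : ∀ j : Fin (d + 1), Mk b (j + 1) = pv d t r (t₁ / r) j
  momz : ∀ k : ℕ, d + 1 < k → Mk b k = 0

set_option maxHeartbeats 2000000 in
theorem core (d : ℕ) (hd : 0 < d) (t : ℕ → ℂ) (ht₂ : ‖t 2‖ < 1 / 2) :
    ∃ δ : ℝ, 0 < δ ∧ ∀ t₀ : ℝ, ∀ t₁ : ℂ,
      0 < t₀ → t₀ < δ → ‖t₁‖ ^ 2 < t₀ * (1 / 2 - ‖t 2‖) →
      ∃ r : ℝ, ∃ b : Fin (d + 1) → ℂ, Adm t t₀ t₁ r b ∧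
        ∀ r' : ℝ, ∀ b' : Fin (d + 1) → ℂ, Adm t t₀ t₁ r' b' → r' = r ∧ b' = b := by
  set s : ℂ := 2 * t 2 with hs
  set q := ‖s‖ with hq
  have hq2 : q = 2 * ‖t 2‖ := by rw [hq, hs, norm_mul]; simp
  have hq0 : 0 ≤ q := norm_nonneg s
  have hq1 : q < 1 := by linarith
  have hd1 : (1 : ℝ) ≤ (d : ℝ) + 1 := by linarith [(Nat.cast_nonneg d : (0 : ℝ) ≤ d)]
  set η : ℝ := (1 - q) / (100 * ((d : ℝ) + 1) ^ 2) with hη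
  have h1q : 0 < 1 - q := by linarith
  have hη0 : 0 < η := by positivity
  have hη1 : ((d : ℝ) + 1) ^ 2 * η = (1 - q) / 100 := by rw [hη]; field_simp
  have hη2 : ((d : ℝ) + 1) * η ≤ (1 - q) / 100 := by
    rw [← hη1]
    gcongr
    nlinarith
  have hη3 : η ≤ (1 - q) / 100 := by nlinarith
  set B : ℝ := 2 ^ (d + 1) / (1 - q) with hB
  have hpow : (2 : ℝ) ≤ 2 ^ (d + 1) := by
    have := one_le_pow₀ (one_le_two : (1 : ℝ) ≤ 2) (n := d)
    rw [pow_succ]; linarith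
  have hB1 : 2 ≤ B * (1 - q) := by rw [hB]; field_simp; exact hpow
  have hB2 : 2 ^ (d + 1) ≤ B := by
    rw [hB, le_div_iff₀ h1q]
    nlinarith
  have hsm : q + (d + 1) ^ 2 * η < 1 := by rw [hη1]; linarith
  obtain ⟨ε₀, he0, he1, hcon⟩ := contraction d t (s := s) (B := B) hη0 hsm hB1
  obtain ⟨L, hL0, hL1, -, -⟩ := theta_bounds d t (s := s) (B := B) hη0.le hsm
  obtain ⟨c, hc0, hc⟩ := lemmaA d hd s hq1
  -- bound for chi
  obtain ⟨K, hK0, hK⟩ : ∃ K : ℝ, 0 ≤ K ∧ ∀ r : ℝ, 0 ≤ r → r ≤ 1 → ∀ z : ℂ,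
      ‖z‖ ≤ 1 + (d + 1) * 2 ^ (d + 1) → ‖chi d t r z‖ ≤ K := by
    have hcont : Continuous (fun x : ℝ × ℂ => chi d t x.1 x.2) := by
      unfold chi
      fun_prop
    obtain ⟨K, hK⟩ := ((isCompact_Icc (a := (0 : ℝ)) (b := 1)).prod
      (isCompact_closedBall (0 : ℂ) (1 + (d + 1) * 2 ^ (d + 1)))).exists_bound_of_continuousOn
      hcont.continuousOn
    refine ⟨max K 0, le_max_right _ _, fun r h0 h1 z hz => ?_⟩
    exact (hK (r, z) ⟨⟨h0, h1⟩, by simpa using hz⟩).trans (le_max_left _ _)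
  set m : ℝ := 1 - q ^ 2 with hm
  have hm0 : 0 < m := by nlinarith
  have hqm : 1 - q ≤ m := by nlinarith
  set ε₁ : ℝ := min ε₀ (m / 10 / (L + 1)) with hε₁
  have hε₁0 : 0 < ε₁ := by positivity
  set r₀ : ℝ := min 1 (η / (K + 1)) with hr₀
  have hr₀0 : 0 < r₀ := by positivity
  refine ⟨min (ε₁ ^ 2) (c * r₀ ^ 2), by positivity, fun t₀ t₁ h0 hδ ht₁ => ?_⟩
  have hδ1 : t₀ < ε₁ ^ 2 := hδ.trans_le (min_le_left _ _)
  have hδ2 : t₀ < c * r₀ ^ 2 := hδ.trans_le (min_le_right _ _)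
  set ε : ℝ := √t₀ with hε
  have hε0 : 0 < ε := Real.sqrt_pos.2 h0
  have hεsq : ε ^ 2 = t₀ := Real.sq_sqrt h0.le
  have hεC : (ε : ℂ) ≠ 0 := Complex.ofReal_ne_zero.2 hε0.ne'
  have hεε₁ : ε < ε₁ := by
    apply lt_of_pow_lt_pow_left₀ 2 hε₁0.le
    rw [hεsq]; exact hδ1
  have hεε₀ : ε ≤ ε₀ := hεε₁.le.trans (min_le_left _ _)
  have hεL : ε * L ≤ m / 10 := by
    calc ε * L ≤ m / 10 / (L + 1) * (L + 1) := by
          gcongr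
          · exact hεε₁.le.trans (min_le_right _ _)
          · linarith
      _ = m / 10 := by field_simp
  set σ : ℂ := t₁ / ε with hσ
  have hσ2 : ‖σ‖ ^ 2 < (1 - q) / 2 := by
    rw [hσ, norm_div, Complex.norm_real, Real.norm_eq_abs, abs_of_pos hε0, div_pow, hεsq,
      div_lt_iff₀ h0]
    rw [hq2]
    linarith
  have hσ1 : ‖σ‖ ≤ 1 := by
    have := norm_nonneg σ
    nlinarith
  obtain ⟨b, hb, hEq, huniq⟩ := hcon ε hε0 hεε₀ σ hσ1
  have hSb : Sb b < 1 := (Sb_le hη0.le hb).trans_lt hsm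
  obtain ⟨hNb, hkb⟩ := kb_pos_of_DD hη0.le hsm hb
  have hkb2 : kb b ^ 2 = 1 - Nb b := Real.sq_sqrt (by linarith)
  -- key: nonvanishing
  have hgg : ∀ w : ℂ, 1 ≤ ‖w‖ → gg b w ≠ 0 := by
    intro w hw
    refine gg_ne_zero_of hq1 hη0.le hd hb ?_ hw
    have h2 := hEq 0
    simp only [Fin.val_zero, if_true] at h2
    have h3 : (starRingEnd ℂ) (b 0) - s * b 0 = σ * kb b + ε * Lc 0 (Th t ε b) := by
      rw [h2]; ring
    rw [h3]
    refine (norm_add_le _ _).trans_lt ?_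
    have h4 : ‖(ε : ℂ) * Lc 0 (Th t ε b)‖ ≤ ε * L := by
      rw [norm_mul, Complex.norm_real, Real.norm_eq_abs, abs_of_pos hε0]
      gcongr
      exact Lc_norm_le 0 (hL1 ε hε0.le (hεε₀.trans he1) b hb)
    have h5 : ‖σ * (kb b : ℂ)‖ ≤ 3 / 4 * m := by
      rw [norm_mul, Complex.norm_real, Real.norm_eq_abs, abs_of_pos hkb]
      have h6 : ‖b ⟨1, by omega⟩‖ ^ 2 ≤ Nb b := by
        have := Finset.single_le_sum (f := fun j : Fin (d + 1) => ((j : ℕ) : ℝ) * ‖b j‖ ^ 2)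
          (fun i _ => by positivity) (Finset.mem_univ (⟨1, by omega⟩ : Fin (d + 1)))
        simp only [Nat.cast_one, one_mul] at this
        exact this
      have h7 : q - η ≤ ‖b ⟨1, by omega⟩‖ := by
        have h8 := mem_DD.1 hb ⟨1, by omega⟩
        simp only [ee, one_ne_zero, if_true, if_false] at h8
        have h9 := norm_sub_norm_le ((starRingEnd ℂ) s) (b ⟨1, by omega⟩)
        rw [norm_sub_rev, Complex.norm_conj] at h9
        linarith
      have h8 : kb b ^ 2 ≤ m + 2 * η := by
        rw [hkb2]
        nlinarith [sq_nonneg (‖b ⟨1, by omega⟩‖ - q), mul_nonneg hq0 (by linarith : 0 ≤ ‖b ⟨1, by omega⟩‖ - q + η)]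
      refine (pow_le_pow_iff_left₀ (by positivity) (by positivity) two_ne_zero).1 ?_
      · rw [mul_pow]
        have h9 : kb b ^ 2 ≤ 1.02 * m := by linarith
        calc ‖σ‖ ^ 2 * kb b ^ 2 ≤ (m / 2) * (1.02 * m) := by gcongr; linarith
          _ ≤ _ := by nlinarith
    have : 2 * ((d : ℝ) + 1) * η ≤ m / 50 := by linarith
    linarith
  set r : ℝ := ε * (kb b)⁻¹ with hr
  have hr0 : 0 < r := by positivity
  have hrC : (r : ℂ) ≠ 0 := Complex.ofReal_ne_zero.2 hr0.ne'
  have hσr : t₁ / r = σ * kb b := by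
    rw [hσ, hr]
    push_cast
    have : (kb b : ℂ) ≠ 0 := Complex.ofReal_ne_zero.2 hkb.ne'
    field_simp
  have hB' : ∀ j : Fin (d + 1), (starRingEnd ℂ) (b j) =
      Lc j (fun w => PP (pv d t r (t₁ / r)) (gg b w)) := by
    intro j
    rw [hσr, Lc_pv hd t hkb hr j]
    exact hEq j
  refine ⟨r, b, ⟨hr0, injOn_of_Sb hSb, fun w hw => dg_ne_zero_of_Sb hSb hw, hgg, ?_, ?_, ?_⟩, ?_⟩
  · rw [← hkb2, hr, mul_pow, hεsq]
    field_simp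
  · intro j
    rw [charB b _ hgg hB' _ (by omega), dif_pos (by omega)]
    congr 1
  · intro k hk
    rw [charB b _ hgg hB' _ (by omega), dif_neg (by omega)]
  · intro r' b' h
    have hr'0 := h.rpos
    have hN' : 0 < 1 - Nb b' := by
      have := h.area
      by_contra hneg
      push Not at hneg
      nlinarith [sq_nonneg r']
    have hk' : 0 < kb b' := Real.sqrt_pos.2 hN'
    have hk'2 : kb b' ^ 2 = 1 - Nb b' := Real.sq_sqrt hN'.le
    have hM2 : Mk b' 2 = s := by
      have := h.mom ⟨1, by omega⟩
      simp [pv] at this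
      rw [hs, this]
      norm_num
    have hcN := hc b' h.gg0 h.dg0 h.inj hN' hM2
    have hr'r₀ : r' < r₀ := by
      apply lt_of_pow_lt_pow_left₀ 2 hr₀0.le
      have h2 := h.area
      have h3 : r' ^ 2 * c ≤ r' ^ 2 * (1 - Nb b') := by gcongr
      have h4 : c * r' ^ 2 < c * r₀ ^ 2 := by linarith
      exact lt_of_mul_lt_mul_left h4 hc0.le
    have hr'1 : r' ≤ 1 := hr'r₀.le.trans (min_le_left _ _)
    have hr'K : r' * K ≤ η := by
      calc r' * K ≤ η / (K + 1) * (K + 1) := by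
            gcongr
            · exact hr'r₀.le.trans (min_le_right _ _)
            · linarith
        _ = η := by field_simp
    have hεr' : ε = r' * kb b' := by
      rw [hε, Real.sqrt_eq_iff_mul_self_eq h0.le (by positivity), ← h.area, ← hk'2]
      ring
    have hr'ε : r' = ε * (kb b')⁻¹ := by rw [hεr']; field_simp
    have hσr' : t₁ / r' = σ * kb b' := by
      rw [hσ, hr'ε]
      push_cast
      have : (kb b' : ℂ) ≠ 0 := Complex.ofReal_ne_zero.2 hk'.ne'
      field_simp
    have hA := charA b' _ h.gg0 h.mom
    have hEq' : Eqn t ε s σ b' := by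
      intro j
      rw [hA j, hσr', Lc_pv hd t hk' hr'ε j]
    have hcb := coeff_bound b' h.gg0
    have hmem : b' ∈ DD d s B η := by
      rw [mem_DD]
      intro j
      by_cases hj : (j : ℕ) = 0
      · rw [if_pos hj, ee, if_neg (by omega), sub_zero]
        exact (hcb j).trans hB2
      · rw [if_neg hj]
        have h2 := hEq' j
        rw [if_neg hj] at h2
        have h3 : b' j - ee d s j = (starRingEnd ℂ) (ε * Lc j (Th t ε b')) := by
          rw [← Complex.conj_conj (b' j), h2, ee]
          split_ifs <;> simp
        rw [h3, Complex.norm_conj, ← Lc_const_mul]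
        refine (Lc_norm_le (K := r' * K) j ?_).trans hr'K
        intro w hw
        have h4 : (ε : ℂ) * Th t ε b' w = r' * chi d t r' (gg b' w) := by
          rw [Th, ← hr'ε, hr'ε]
          push_cast
          ring
        rw [h4, norm_mul, Complex.norm_real, Real.norm_eq_abs, abs_of_pos hr'0]
        gcongr
        apply hK r' hr'0.le hr'1
        have h5 := gg_sub_le b' hcb hw.ge
        have h6 := norm_sub_norm_le (gg b' w) w
        linarith
    have hbb := huniq b' hmem hEq'
    subst hbb
    exact ⟨hr'ε, rfl⟩

end PolyCurve

end

section

open Filter Topology Metric Set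

namespace PolyCurve

variable {d : ℕ}

theorem polyParam_eq (r : ℝ) (b : Fin (d + 1) → ℂ) :
    polyParam d r (fun j => (r : ℂ) * b j) = fun w => (r : ℂ) * gg b w := by
  funext w
  unfold polyParam gg
  rw [mul_add, Finset.mul_sum]
  congr 1
  apply Finset.sum_congr rfl
  intro j _
  rw [zpow_neg, zpow_natCast, inv_pow, mul_assoc]

theorem deriv_polyParam (r : ℝ) (b : Fin (d + 1) → ℂ) {w : ℂ} (hw : w ≠ 0) :
    deriv (fun w => (r : ℂ) * gg b w) w = r * dg b w :=
  ((hasDerivAt_gg b hw).const_mul (r : ℂ)).deriv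

theorem circle_congr {f g : ℂ → ℂ} (h : ∀ w : ℂ, ‖w‖ = 1 → f w = g w) :
    (∮ w in C(0, 1), f w) = ∮ w in C(0, 1), g w := by
  apply circleIntegral.integral_congr zero_le_one
  intro w hw
  exact h w (by simpa using hw)

theorem encArea_eq (r : ℝ) (b : Fin (d + 1) → ℂ) :
    encArea (fun w => (r : ℂ) * gg b w) = ((Real.pi * (r ^ 2 * (1 - Nb b)) : ℝ) : ℂ) := by
  have h1 := Vm_zero b
  have h2 : (∮ w in C(0, 1), gc b w * gg b w ^ 0 * dg b w) =
      2 * Real.pi * I * ((1 - Nb b : ℝ) : ℂ) := by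
    rw [← h1, Vm, ← mul_assoc, mul_inv_cancel₀ Complex.two_pi_I_ne_zero, one_mul]
  have h3 : (∮ w in C(0, 1), (starRingEnd ℂ) ((r : ℂ) * gg b w) * deriv (fun w => (r : ℂ) * gg b w) w) =
      ∮ w in C(0, 1), (r : ℂ) ^ 2 * (gc b w * gg b w ^ 0 * dg b w) := by
    apply circle_congr
    intro w hw
    rw [deriv_polyParam r b (ne_zero_of_one_le hw.ge), map_mul, Complex.conj_ofReal, conj_gg b hw]
    ring
  unfold encArea
  rw [h3, circleIntegral.integral_const_mul, h2]
  push_cast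
  have : I ≠ 0 := Complex.I_ne_zero
  field_simp

theorem extMoment_eq {r : ℝ} (hr : 0 < r) (b : Fin (d + 1) → ℂ) (k : ℕ) :
    extMoment (fun w => (r : ℂ) * gg b w) k = (k : ℂ)⁻¹ * ((r : ℂ) ^ 2 * ((r : ℂ) ^ k)⁻¹) * Mk b k := by
  have h3 : (∮ w in C(0, 1), (starRingEnd ℂ) ((r : ℂ) * gg b w) * ((r : ℂ) * gg b w) ^ (-(k : ℤ)) *
      deriv (fun w => (r : ℂ) * gg b w) w) =
      ∮ w in C(0, 1), ((r : ℂ) ^ 2 * ((r : ℂ) ^ k)⁻¹) * (gc b w * gg b w ^ (-(k : ℤ)) * dg b w) := by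
    apply circle_congr
    intro w hw
    rw [deriv_polyParam r b (ne_zero_of_one_le hw.ge), map_mul, Complex.conj_ofReal, conj_gg b hw,
      mul_zpow, zpow_neg (r : ℂ), zpow_natCast]
    ring
  unfold extMoment Mk
  rw [h3, circleIntegral.integral_const_mul, mul_inv (2 * (Real.pi : ℂ) * I)]
  ring

theorem moment_iff {r : ℝ} (hr : 0 < r) (b : Fin (d + 1) → ℂ) (k : ℕ) (hk : 1 ≤ k) (x y : ℂ)
    (hxy : y * (r : ℂ) ^ 2 = k * x * (r : ℂ) ^ k) :
    extMoment (fun w => (r : ℂ) * gg b w) k = x ↔ Mk b k = y := by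
  have hrC : (r : ℂ) ≠ 0 := Complex.ofReal_ne_zero.2 hr.ne'
  have hkC : (k : ℂ) ≠ 0 := Nat.cast_ne_zero.2 (by omega)
  have hrk : (r : ℂ) ^ k ≠ 0 := pow_ne_zero _ hrC
  have hr2 : (r : ℂ) ^ 2 ≠ 0 := pow_ne_zero _ hrC
  rw [extMoment_eq hr]
  have h1 : (k : ℂ)⁻¹ * ((r : ℂ) ^ 2 * ((r : ℂ) ^ k)⁻¹) * y = x := by
    calc _ = (k : ℂ)⁻¹ * ((r : ℂ) ^ k)⁻¹ * (y * (r : ℂ) ^ 2) := by ring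
      _ = _ := by rw [hxy]; field_simp
  rw [← h1]
  constructor
  · intro h
    exact mul_left_cancel₀ (by positivity) h
  · intro h
    rw [h]

/-- the conditions of the main theorem in terms of the normalized data -/
theorem adm_iff (hd : 0 < d) (t : ℕ → ℂ) (t₀ : ℝ) (t₁ : ℂ) {r : ℝ} (hr : 0 < r) (b : Fin (d + 1) → ℂ)
    {f : ℂ → ℂ} (hf : f = fun w => (r : ℂ) * gg b w) :
    (Set.InjOn f (Metric.sphere (0 : ℂ) 1) ∧
        (∀ w : ℂ, 1 ≤ ‖w‖ → deriv f w ≠ 0) ∧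
        (∀ w : ℂ, 1 ≤ ‖w‖ → f w ≠ 0) ∧
        encArea f = ((Real.pi * t₀ : ℝ) : ℂ) ∧
        extMoment f 1 = t₁ ∧
        (∀ k : ℕ, 2 ≤ k → k ≤ d + 1 → extMoment f k = t k) ∧
        (∀ k : ℕ, d + 1 < k → extMoment f k = 0)) ↔ Adm t t₀ t₁ r b := by
  have hrC : (r : ℂ) ≠ 0 := Complex.ofReal_ne_zero.2 hr.ne'
  have hderiv : ∀ w : ℂ, 1 ≤ ‖w‖ → deriv f w = r * dg b w := by
    intro w hw
    rw [hf]
    exact deriv_polyParam r b (ne_zero_of_one_le hw)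
  have i1 : Set.InjOn f (Metric.sphere (0 : ℂ) 1) ↔ InjOn (gg b) (sphere 0 1) := by
    rw [hf]
    constructor
    · intro h x hx y hy hxy
      exact h hx hy (by simp only [hxy])
    · intro h x hx y hy hxy
      exact h hx hy (mul_left_cancel₀ hrC hxy)
  have i2 : (∀ w : ℂ, 1 ≤ ‖w‖ → deriv f w ≠ 0) ↔ ∀ w : ℂ, 1 ≤ ‖w‖ → dg b w ≠ 0 := by
    refine forall₂_congr fun w hw => ?_
    rw [hderiv w hw, mul_ne_zero_iff]
    exact and_iff_right hrC
  have i3 : (∀ w : ℂ, 1 ≤ ‖w‖ → f w ≠ 0) ↔ ∀ w : ℂ, 1 ≤ ‖w‖ → gg b w ≠ 0 := by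
    refine forall₂_congr fun w hw => ?_
    rw [hf, mul_ne_zero_iff]
    exact and_iff_right hrC
  have i4 : encArea f = ((Real.pi * t₀ : ℝ) : ℂ) ↔ r ^ 2 * (1 - Nb b) = t₀ := by
    rw [hf, encArea_eq, Complex.ofReal_inj]
    exact mul_right_inj' Real.pi_ne_zero
  have i5 : extMoment f 1 = t₁ ↔ Mk b 1 = pv d t r (t₁ / r) 0 := by
    rw [hf]
    apply moment_iff hr b 1 le_rfl
    simp [pv]
    field_simp
  have i6 : ∀ k : ℕ, ∀ hk : 2 ≤ k, ∀ hk' : k ≤ d + 1,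
      (extMoment f k = t k ↔ Mk b k = pv d t r (t₁ / r) ⟨k - 1, by omega⟩) := by
    intro k hk hk'
    rw [hf]
    apply moment_iff hr b k (by omega)
    obtain ⟨n, rfl⟩ : ∃ n, k = n + 2 := ⟨k - 2, by omega⟩
    unfold pv
    simp only
    rw [if_neg (by omega), show n + 2 - 1 = n + 1 from rfl, Nat.add_sub_cancel]
    push_cast
    ring
  have i7 : ∀ k : ℕ, d + 1 < k → (extMoment f k = 0 ↔ Mk b k = 0) := by
    intro k hk
    rw [hf]
    apply moment_iff hr b k (by omega)
    simp
  constructor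
  · rintro ⟨h1, h2, h3, h4, h5, h6, h7⟩
    refine ⟨hr, i1.1 h1, i2.1 h2, i3.1 h3, i4.1 h4, ?_, fun k hk => (i7 k hk).1 (h7 k hk)⟩
    intro j
    by_cases hj : j = 0
    · subst hj
      exact i5.1 h5
    · have hj' : (j : ℕ) ≠ 0 := fun h => hj (Fin.ext h)
      exact (i6 (j + 1) (by omega) (by omega)).1 (h6 _ (by omega) (by omega))
  · intro h
    refine ⟨i1.2 h.inj, i2.2 h.dg0, i3.2 h.gg0, i4.2 h.area, i5.2 (h.mom 0), ?_,
      fun k hk => (i7 k hk).2 (h.momz k hk)⟩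
    intro k hk hk'
    rw [i6 k hk hk', ← h.mom]
    congr 1
    simp only
    omega

end PolyCurve

end

/-- Given `t₂,…,t_{d+1} ∈ ℂ` with `|t₂| < 1/2`, there exists `δ > 0` such that for all
`t₀, t₁` with `0 < t₀ < δ` and `|t₁|² < t₀(1/2 − |t₂|)`, there is a unique positively
oriented polynomial curve of degree `≤ d` encircling the origin with enclosed area `π t₀`
and exterior harmonic moments `t₁,…,t_{d+1}` (and all higher moments zero).  Such a curve
is uniquely parametrized by its data `(r, a₀, …, a_d)` with `r > 0`. -/
theorem stmt_9 (d : ℕ) (hd : 0 < d) (t : ℕ → ℂ) (ht₂ : ‖t 2‖ < 1 / 2) :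
    ∃ δ : ℝ, 0 < δ ∧ ∀ t₀ : ℝ, ∀ t₁ : ℂ,
      0 < t₀ → t₀ < δ → ‖t₁‖ ^ 2 < t₀ * (1 / 2 - ‖t 2‖) →
      ∃! ra : ℝ × (Fin (d + 1) → ℂ),
        0 < ra.1 ∧
        Set.InjOn (polyParam d ra.1 ra.2) (Metric.sphere (0 : ℂ) 1) ∧
        (∀ w : ℂ, 1 ≤ ‖w‖ → deriv (polyParam d ra.1 ra.2) w ≠ 0) ∧
        (∀ w : ℂ, 1 ≤ ‖w‖ → polyParam d ra.1 ra.2 w ≠ 0) ∧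
        encArea (polyParam d ra.1 ra.2) = ((Real.pi * t₀ : ℝ) : ℂ) ∧
        extMoment (polyParam d ra.1 ra.2) 1 = t₁ ∧
        (∀ k : ℕ, 2 ≤ k → k ≤ d + 1 → extMoment (polyParam d ra.1 ra.2) k = t k) ∧
        (∀ k : ℕ, d + 1 < k → extMoment (polyParam d ra.1 ra.2) k = 0) := by
  obtain ⟨δ, hδ, H⟩ := PolyCurve.core d hd t ht₂
  refine ⟨δ, hδ, fun t₀ t₁ h0 h1 h2 => ?_⟩
  obtain ⟨r, b, hA, hU⟩ := H t₀ t₁ h0 h1 h2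
  refine ⟨(r, fun j => (r : ℂ) * b j), ?_, ?_⟩
  · exact ⟨hA.rpos, (PolyCurve.adm_iff hd t t₀ t₁ hA.rpos b (PolyCurve.polyParam_eq r b)).2 hA⟩
  · rintro ⟨r', a⟩ ⟨hr', hrest⟩
    simp only at hr' hrest
    have hrC : (r' : ℂ) ≠ 0 := Complex.ofReal_ne_zero.2 hr'.ne'
    have ha : a = fun j => (r' : ℂ) * (a j / r') := by
      funext j
      field_simp
    have hA' := (PolyCurve.adm_iff hd t t₀ t₁ hr' (fun j => a j / (r' : ℂ))
      (f := polyParam d r' a) (by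
        conv_lhs => rw [ha]
        exact PolyCurve.polyParam_eq r' _)).1 hrest
    obtain ⟨e1, e2⟩ := hU r' _ hA'
    rw [← e1, ← e2, ← ha]
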